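/- Let d ≥ 5, n ≥ 4 and a, b > 1, and let E_0, E_1 be (a,b) separated DOT clusterings of n-element configurations in Z^d. There is a number c = c(b,d,n) > 0 such that if a ≥ e^{max{100b, 10d²}}, then P_{E_0}(C_1 = E_1) ≥ (1 − c·a^{2.1−d})·Q_{E_0}(D_1 = E_1). -/

import Mathlib

open MeasureTheory

namespace HATFormal

/-- Points of the lattice `ℤ^d`. -/
abbrev Pt (d : ℕ) := Fin d → ℤ

/-- The `2d` unit steps of the simple random walk on `ℤ^d`. -/
def Dir (d : ℕ) : Set (Pt d) :=
  {s | ∃ i : Fin d, s = Pi.single i 1 ∨ s = Pi.single i (-1)}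

/-- The position, after `t` steps, of the walk started at `x` with steps `s`. -/
def wpos (d : ℕ) (x : Pt d) {T : ℕ} (s : Fin T → Pt d) (t : ℕ) : Pt d :=
  x + ∑ i ∈ Finset.univ.filter (fun i : Fin T => (i : ℕ) < t), s i

/-- The probability of an event `P` of the first `T` steps of simple random walk on `ℤ^d`. -/
noncomputable def prob (d T : ℕ) (P : (Fin T → Pt d) → Prop) : ℝ :=
  (Nat.card {s : Fin T → Pt d // (∀ i, s i ∈ Dir d) ∧ P s} : ℝ) / ((2 * d : ℕ) : ℝ) ^ T

open Classical in
/-- `esc d A x = P_x(τ_A = ∞)` if `x ∈ A`, and `0` otherwise. -/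
noncomputable def esc (d : ℕ) (A : Set (Pt d)) (x : Pt d) : ℝ :=
  if x ∈ A then ⨅ T : ℕ, prob d T (fun s => ∀ t, 1 ≤ t → t ≤ T → wpos d x s t ∉ A) else 0

/-- The capacity of `A`. -/
noncomputable def capa (d : ℕ) (A : Set (Pt d)) : ℝ := ∑' x : A, esc d A (x : Pt d)

/-- The harmonic measure `H_A(x) = esc_A(x) / cap_A`. -/
noncomputable def harm (d : ℕ) (A : Set (Pt d)) (x : Pt d) : ℝ := esc d A x / capa d A

/-- `P_x(τ_W < ∞)`. -/
noncomputable def retProb (d : ℕ) (W : Set (Pt d)) (x : Pt d) : ℝ :=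
  ∑' t : ℕ, prob d t (fun s => 1 ≤ t ∧ wpos d x s t ∈ W ∧
    ∀ u, 1 ≤ u → u < t → wpos d x s u ∉ W)

/-- `P_x(τ_W < ∞ and S_{τ_W − 1} = y)`. -/
noncomputable def hitFrom (d : ℕ) (W : Set (Pt d)) (x y : Pt d) : ℝ :=
  ∑' t : ℕ, prob d t (fun s => 1 ≤ t ∧ wpos d x s t ∈ W ∧ wpos d x s (t - 1) = y ∧
    ∀ u, 1 ≤ u → u < t → wpos d x s u ∉ W)

/-- `P_x(τ_W < ∞ and S_{τ_W} ∈ T)`. -/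
noncomputable def firstHitIn (d : ℕ) (W T : Set (Pt d)) (x : Pt d) : ℝ :=
  ∑' t : ℕ, prob d t (fun s => 1 ≤ t ∧ wpos d x s t ∈ W ∧ wpos d x s t ∈ T ∧
    ∀ u, 1 ≤ u → u < t → wpos d x s u ∉ W)

/-- `P_x(S_{τ_W − 1} = y ∣ τ_W < ∞)`. -/
noncomputable def transP (d : ℕ) (W : Set (Pt d)) (x y : Pt d) : ℝ :=
  hitFrom d W x y / retProb d W x

/-- The Green's function of simple random walk on `ℤ^d`. -/
noncomputable def green (d : ℕ) (x : Pt d) : ℝ :=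
  ∑' t : ℕ, prob d t (fun s => wpos d x s t = 0)

/-- Configurations: finite subsets of `ℤ^d`. -/
abbrev Conf (d : ℕ) := Finset (Pt d)

/-- `p_U(x, y)`, the probability that HAT activates at `x` and transports to `y`. -/
noncomputable def pHAT (d : ℕ) (U : Conf d) (x y : Pt d) : ℝ :=
  harm d (↑U) x * transP d ((↑U : Set (Pt d)) \ {x}) x y

open Classical in
/-- The transition probabilities of HAT. -/
noncomputable def hatProb (d : ℕ) (U V : Conf d) : ℝ :=
  if V = U then ∑' z : Pt d, pHAT d U z z
  else ∑' x : Pt d, ∑' y : Pt d,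
    if x ∈ U ∧ x ≠ y ∧ V = insert y (U.erase x) then pHAT d U x y else 0

instance (d : ℕ) : MeasurableSpace (Conf d) := ⊤

/-- `μ` is the law of HAT started from `U`. -/
def IsHATLaw (d : ℕ) (U : Conf d) (μ : Measure (ℕ → Conf d)) : Prop :=
  IsProbabilityMeasure μ ∧
  ∀ (t : ℕ) (u : ℕ → Conf d),
    μ {ω | ∀ s ≤ t, ω s = u s} =
      (if u 0 = U then 1 else 0) *
        ∏ s ∈ Finset.range t, ENNReal.ofReal (hatProb d (u s) (u (s + 1)))

/-- A signed permutation plus translation of `ℤ^d`. -/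
def SymImage (d : ℕ) (σ : Equiv.Perm (Fin d)) (ε : Fin d → ℤ) (v : Pt d) (x : Pt d) : Pt d :=
  fun i => v i + ε i * x (σ i)

/-- `SymEq d U V` holds when `V = gU` for a symmetry `g` of `ℤ^d`. -/
def SymEq (d : ℕ) (U V : Conf d) : Prop :=
  ∃ (σ : Equiv.Perm (Fin d)) (ε : Fin d → ℤ) (v : Pt d),
    (∀ i, ε i = 1 ∨ ε i = -1) ∧ V = U.image (SymImage d σ ε v)

/-- Euclidean distance on `ℤ^d`. -/
noncomputable def dist0 (d : ℕ) (x y : Pt d) : ℝ :=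
  Real.sqrt (∑ i, ((x i : ℝ) - (y i : ℝ)) ^ 2)

/-- Euclidean distance between finite subsets of `ℤ^d`. -/
noncomputable def setDist (d : ℕ) (A B : Finset (Pt d)) : ℝ :=
  sInf {r : ℝ | ∃ x ∈ A, ∃ y ∈ B, r = dist0 d x y}

/-- Euclidean diameter of a finite subset of `ℤ^d`. -/
noncomputable def diam0 (d : ℕ) (A : Finset (Pt d)) : ℝ :=
  sSup {r : ℝ | ∃ x ∈ A, ∃ y ∈ A, r = dist0 d x y}

/-- Lattice (nearest-neighbor) adjacency in `ℤ^d`. -/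
def latAdj (d : ℕ) (x y : Pt d) : Prop := (∑ i, (x i - y i).natAbs) = 1

/-- Exterior lattice boundary of a set. -/
def bdry (d : ℕ) (A : Set (Pt d)) : Set (Pt d) := {z | z ∉ A ∧ ∃ w ∈ A, latAdj d z w}

/-- Non-isolated configurations: some exposed element has a lattice neighbor in the set. -/
def NonIso (d : ℕ) (U : Conf d) : Prop :=
  ∃ x ∈ U, 0 < esc d (↑U) x ∧ ∃ y ∈ U, latAdj d x y

/-- `C` is a clustering (ordered partition into nonempty clusters) of `U`. -/
def IsClusteringOf (d : ℕ) {k : ℕ} (C : Fin k → Finset (Pt d)) (U : Finset (Pt d)) : Prop :=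
  (∀ i, (C i).Nonempty) ∧ (∀ i j, i ≠ j → Disjoint (C i) (C j)) ∧
    Finset.univ.biUnion C = U

/-- `C^{≠ i}`, the union of the clusters other than `i`. -/
def others (d : ℕ) {k : ℕ} (C : Fin k → Finset (Pt d)) (i : Fin k) : Finset (Pt d) :=
  Finset.univ.biUnion fun j => if j = i then ∅ else C j

/-- The separation of a clustering. -/
noncomputable def sep (d : ℕ) {k : ℕ} (C : Fin k → Finset (Pt d)) : ℝ :=
  ⨅ i, setDist d (C i) (others d C i)

/-- `(a, b)` separated dimer-or-trimer (DOT) clusterings. -/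
def IsDOT (d : ℕ) {k : ℕ} (C : Fin k → Finset (Pt d)) (a b : ℝ) : Prop :=
  (∀ i, (C i).card = 2 ∨ (C i).card = 3) ∧ a ≤ sep d C ∧
    ∀ i, diam0 d (C i) ≤ b * Real.log (setDist d (C i) (others d C i))

/-- Clusterings with an unspecified number of clusters. -/
abbrev ClusteringS (d : ℕ) := Σ k : ℕ, Fin k → Finset (Pt d)

/-- `π(C)`, the union of the clusters of `C`. -/
def confOf (d : ℕ) (C : ClusteringS d) : Conf d := Finset.univ.biUnion C.2

/-- `C ∈ 𝒞(U, a, b)`. -/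
def InC (d : ℕ) (U : Conf d) (a b : ℝ) (C : ClusteringS d) : Prop :=
  IsClusteringOf d C.2 U ∧ IsDOT d C.2 a b

/-- `U ∈ 𝒰_{d,n}(a, b)`. -/
def InU (d n : ℕ) (a b : ℝ) (U : Conf d) : Prop :=
  U.card = n ∧ ∃ C : ClusteringS d, InC d U a b C

/-- `C` is a clustering of an `n`-element configuration. -/
def IsClusteringConf (d n : ℕ) (C : ClusteringS d) : Prop :=
  (∀ i, (C.2 i).Nonempty) ∧ (∀ i j, i ≠ j → Disjoint (C.2 i) (C.2 j)) ∧
    (confOf d C).card = n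

open Classical in
/-- One step of the natural clustering. -/
noncomputable def clustStep (d : ℕ) (Ut Ut1 : Conf d) (C : ClusteringS d) : ClusteringS d :=
  if Ut1 = Ut then C
  else if h : ∃ p : Pt d × Pt d × Fin C.1,
      Ut \ Ut1 = {p.1} ∧ Ut1 \ Ut = {p.2.1} ∧ p.1 ∈ C.2 p.2.2 then
    ⟨C.1, Function.update C.2 h.choose.2.2
      (insert h.choose.2.1 ((C.2 h.choose.2.2).erase h.choose.1))⟩
  else ⟨1, fun _ => Ut1⟩

/-- The natural clustering of the trajectory `ω` with initial clustering `C0`. -/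
noncomputable def natClust (d : ℕ) (ω : ℕ → Conf d) (C0 : ClusteringS d) : ℕ → ClusteringS d
  | 0 => C0
  | t + 1 => clustStep d (ω t) (ω (t + 1)) (natClust d ω C0 t)

/-- `a_s = s^{1/2 − n^{−100}} + 100 n`. -/
noncomputable def aSep (n s : ℕ) : ℝ :=
  (s : ℝ) ^ ((1 : ℝ) / 2 - (n : ℝ) ^ (-(100 : ℝ))) + 100 * n

/-- `C^{i, x, y}`: remove `x` from cluster `i` of `C` and add `y` to that cluster. -/
def updC (d : ℕ) (C : ClusteringS d) (i : Fin C.1) (x y : Pt d) : ClusteringS d :=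
  ⟨C.1, Function.update C.2 i (insert y ((C.2 i).erase x))⟩

open Classical in
/-- The transition probabilities of the lifting of HAT to clusterings. -/
noncomputable def liftProb (d : ℕ) (E0 E1 : ClusteringS d) : ℝ :=
  ∑' x : Pt d, ∑' y : Pt d,
    if ∃ i : Fin E0.1, x ∈ E0.2 i ∧ E1 = updC d E0 i x y
    then pHAT d (confOf d E0) x y else 0

/-- The capacity of a clustering: the sum of the capacities of its clusters. -/
noncomputable def capS (d : ℕ) (C : ClusteringS d) : ℝ := ∑ i, capa d (↑(C.2 i))

/-- `H_C(i, x) = esc_{C^i}(x) / cap_C`. -/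
noncomputable def harmS (d : ℕ) (C : ClusteringS d) (i : Fin C.1) (x : Pt d) : ℝ :=
  esc d (↑(C.2 i)) x / capS d C

/-- `q_C(i, x, y)`. -/
noncomputable def qIHAT (d : ℕ) (C : ClusteringS d) (i : Fin C.1) (x y : Pt d) : ℝ :=
  harmS d C i x * transP d ((↑(C.2 i) : Set (Pt d)) \ {x}) x y

open Classical in
/-- The transition probabilities of intracluster HAT (IHAT). -/
noncomputable def ihatProb (d : ℕ) (D E : ClusteringS d) : ℝ :=
  ∑' x : Pt d, ∑' y : Pt d, ∑ i : Fin D.1,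
    if x ∈ D.2 i ∧ E = updC d D i x y then qIHAT d D i x y else 0

instance (d : ℕ) : MeasurableSpace (ClusteringS d) := ⊤

open Classical in
/-- `μ` is the law of the lifted HAT chain started from `E0`. -/
def IsLiftLaw (d : ℕ) (E0 : ClusteringS d) (μ : Measure (ℕ → ClusteringS d)) : Prop :=
  IsProbabilityMeasure μ ∧
  ∀ (t : ℕ) (u : ℕ → ClusteringS d),
    μ {ω | ∀ s ≤ t, ω s = u s} =
      (if u 0 = E0 then 1 else 0) *
        ∏ s ∈ Finset.range t, ENNReal.ofReal (liftProb d (u s) (u (s + 1)))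

open Classical in
/-- `μ` is the law of intracluster HAT started from `D0`. -/
def IsIHATLaw (d : ℕ) (D0 : ClusteringS d) (μ : Measure (ℕ → ClusteringS d)) : Prop :=
  IsProbabilityMeasure μ ∧
  ∀ (t : ℕ) (u : ℕ → ClusteringS d),
    μ {ω | ∀ s ≤ t, ω s = u s} =
      (if u 0 = D0 then 1 else 0) *
        ∏ s ∈ Finset.range t, ENNReal.ofReal (ihatProb d (u s) (u (s + 1)))

/-- `Pairs(E0, E1)`. -/
def Pairs (d : ℕ) (E0 E1 : ClusteringS d) : Set (Pt d × Pt d) :=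
  {p | 0 < pHAT d (confOf d E0) p.1 p.2 ∧
    ∃ i : Fin E0.1, p.1 ∈ E0.2 i ∧ E1 = updC d E0 i p.1 p.2}

/-- `Triples(E0, E1)`. -/
def Triples (d : ℕ) (E0 E1 : ClusteringS d) : Set (Fin E0.1 × Pt d × Pt d) :=
  {q | 0 < qIHAT d E0 q.1 q.2.1 q.2.2 ∧ E1 = updC d E0 q.1 q.2.1 q.2.2}

/-- The first standard basis vector of `ℤ^d`. -/
def e1v (d : ℕ) : Pt d := fun i => if (i : ℕ) = 0 then 1 else 0

/-- Reference dimers and trimers. -/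
def Ref (d : ℕ) : Set (Finset (Pt d)) :=
  {A | ∃ x : Pt d, A = {x, x + e1v d} ∨ A = {x, x + e1v d, x + e1v d + e1v d}}

/-- *-adjacency in `ℤ^d`: distinct points differing by at most one in each coordinate. -/
def starAdj (d : ℕ) (x y : Pt d) : Prop := x ≠ y ∧ ∀ i, (x i - y i).natAbs ≤ 1

/-- The *-visible boundary of `A`. -/
def visBdry (d : ℕ) (A : Finset (Pt d)) : Set (Pt d) :=
  {x | (∃ y ∈ A, starAdj d x y) ∧
    ∃ γ : ℕ → Pt d, γ 0 = x ∧ (∀ t, latAdj d (γ t) (γ (t + 1))) ∧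
      (∀ t, γ t ∉ A) ∧ ∀ r : ℝ, ∃ t, r < dist0 d (γ t) 0}

/-- `A` is connected in the nearest-neighbor graph of `ℤ^d`. -/
def LatConnected (d : ℕ) (A : Finset (Pt d)) : Prop :=
  ∀ x ∈ A, ∀ y ∈ A, ∃ (L : ℕ) (γ : ℕ → Pt d), γ 0 = x ∧ γ L = y ∧
    (∀ t < L, latAdj d (γ t) (γ (t + 1))) ∧ ∀ t ≤ L, γ t ∈ A

/-- Strict lexicographic order on `ℤ^d`. -/
def lexLt (d : ℕ) (x y : Pt d) : Prop :=
  ∃ i : Fin d, (∀ j, j < i → x j = y j) ∧ x i < y i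

/-- `x` is the lex (least) element of `A`. -/
def IsLex (d : ℕ) (A : Finset (Pt d)) (x : Pt d) : Prop :=
  x ∈ A ∧ ∀ y ∈ A, y ≠ x → lexLt d x y

end HATFormal

namespace HATFormal

/-! ### One-step averages and probabilities -/

/-- The average of `φ` over the neighbours of `x`. -/
noncomputable def Av (d : ℕ) (φ : Pt d → ℝ) (x : Pt d) : ℝ :=
  (∑ q : Fin d × Bool, φ (x + Pi.single q.1 (if q.2 then 1 else -1))) / (2 * d : ℝ)

/-- The unit step with index `q`. -/
def dv {d : ℕ} (q : Fin d × Bool) : Pt d := Pi.single q.1 (if q.2 then 1 else -1)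

lemma Av_def (d : ℕ) (φ : Pt d → ℝ) (x : Pt d) :
    Av d φ x = (∑ q : Fin d × Bool, φ (x + dv q)) / (2 * d : ℝ) := rfl

lemma dv_inj {d : ℕ} : Function.Injective (dv (d := d)) := by
  rintro ⟨i, b⟩ ⟨j, c⟩ h
  have h1 := congrFun h i
  have hij : i = j := by
    by_contra hne
    simp [dv, Pi.single_eq_of_ne hne] at h1
    split_ifs at h1 <;> simp_all
  subst hij
  simp [dv] at h1
  cases b <;> cases c <;> simp_all

lemma mem_Dir {d : ℕ} (s : Pt d) : s ∈ Dir d ↔ ∃ q : Fin d × Bool, s = dv q := by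
  constructor
  · rintro ⟨i, h | h⟩
    · exact ⟨(i, true), by simp [dv, h]⟩
    · exact ⟨(i, false), by simp [dv, h]⟩
  · rintro ⟨⟨i, b⟩, h⟩
    refine ⟨i, ?_⟩
    cases b <;> simp_all [dv]

lemma Dir_finite (d : ℕ) : (Dir d).Finite := by
  apply (Set.finite_range (dv (d := d))).subset
  intro s hs
  obtain ⟨q, rfl⟩ := (mem_Dir s).1 hs
  exact ⟨q, rfl⟩

lemma fin_paths (d T : ℕ) (P : (Fin T → Pt d) → Prop) :
    Finite {s : Fin T → Pt d // (∀ i, s i ∈ Dir d) ∧ P s} := by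
  have : (Set.univ.pi (fun _ : Fin T => Dir d)).Finite :=
    Set.Finite.pi' (fun _ => Dir_finite d) |>.subset (by intro s hs; simpa using hs)
  have h2 : {s : Fin T → Pt d | (∀ i, s i ∈ Dir d) ∧ P s}.Finite :=
    this.subset (by intro s hs; simpa using hs.1)
  exact h2.to_subtype

lemma prob_nonneg (d T : ℕ) (P : (Fin T → Pt d) → Prop) : 0 ≤ prob d T P := by
  unfold prob; positivity

lemma prob_zero (d : ℕ) (P : (Fin 0 → Pt d) → Prop) [Decidable (P ![])] :
    prob d 0 P = if P ![] then 1 else 0 := by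
  unfold prob
  split_ifs with h
  · have : Nat.card {s : Fin 0 → Pt d // (∀ i, s i ∈ Dir d) ∧ P s} = 1 := by
      rw [Nat.card_eq_one_iff_unique]
      refine ⟨⟨fun a b => Subtype.ext (Subsingleton.elim _ _)⟩, ⟨⟨![], by simp, h⟩⟩⟩
    rw [this]; simp
  · have : IsEmpty {s : Fin 0 → Pt d // (∀ i, s i ∈ Dir d) ∧ P s} := by
      refine ⟨fun s => h ?_⟩
      have := s.2.2
      rwa [Subsingleton.elim s.1 ![]] at this
    rw [Nat.card_of_isEmpty]; simp

lemma prob_succ (d T : ℕ) (P : (Fin (T + 1) → Pt d) → Prop) :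
    prob d (T + 1) P =
      (∑ q : Fin d × Bool, prob d T (fun s => P (Fin.cons (dv q) s))) / (2 * d : ℝ) := by
  unfold prob
  have key : Nat.card {s : Fin (T + 1) → Pt d // (∀ i, s i ∈ Dir d) ∧ P s} =
      ∑ q : Fin d × Bool, Nat.card {s : Fin T → Pt d // (∀ i, s i ∈ Dir d) ∧
        P (Fin.cons (dv q) s)} := by
    have hf : ∀ q : Fin d × Bool, Finite {s : Fin T → Pt d // (∀ i, s i ∈ Dir d) ∧
        P (Fin.cons (dv q) s)} := fun q => fin_paths d T _
    rw [← Nat.card_sigma]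
    symm
    let F : (Σ q : Fin d × Bool, {s : Fin T → Pt d // (∀ i, s i ∈ Dir d) ∧
        P (Fin.cons (dv q) s)}) → {s : Fin (T + 1) → Pt d // (∀ i, s i ∈ Dir d) ∧ P s} :=
      fun p => ⟨Fin.cons (dv p.1) p.2.1, by
        refine ⟨?_, p.2.2.2⟩
        intro i
        refine Fin.cases ?_ (fun j => ?_) i
        · simpa using (mem_Dir _).2 ⟨p.1, rfl⟩
        · simpa using p.2.2.1 j⟩
    refine Nat.card_eq_of_bijective F ⟨?_, ?_⟩
    · rintro ⟨q, s, hs⟩ ⟨q', s', hs'⟩ h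
      have h1 : (Fin.cons (dv q) s : Fin (T + 1) → Pt d) = Fin.cons (dv q') s' :=
        congrArg Subtype.val h
      obtain ⟨h2, h3⟩ := Fin.cons_injective2 h1
      have := dv_inj h2
      subst this; subst h3; rfl
    · rintro ⟨s, hs, hP⟩
      obtain ⟨q, hq⟩ := (mem_Dir _).1 (hs 0)
      have e : (Fin.cons (dv q) (Fin.tail s) : Fin (T + 1) → Pt d) = s := by
        rw [← hq]; exact Fin.cons_self_tail s
      refine ⟨⟨q, Fin.tail s, fun i => hs i.succ, by rwa [e]⟩, ?_⟩
      exact Subtype.ext e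
  rw [key]
  push_cast
  rw [← Finset.sum_div, div_div, pow_succ]

lemma wpos_zero (d : ℕ) (x : Pt d) {T : ℕ} (s : Fin T → Pt d) : wpos d x s 0 = x := by
  simp [wpos]

lemma wpos_cons (d : ℕ) (x e : Pt d) {T : ℕ} (s : Fin T → Pt d) (t : ℕ) :
    wpos d x (Fin.cons e s : Fin (T + 1) → Pt d) (t + 1) = wpos d (x + e) s t := by
  unfold wpos
  rw [Finset.sum_filter, Finset.sum_filter, Fin.sum_univ_succ]
  simp [add_assoc]

lemma Av_mono {d : ℕ} {φ ψ : Pt d → ℝ} {x : Pt d} (h : ∀ q, φ (x + dv q) ≤ ψ (x + dv q)) :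
    Av d φ x ≤ Av d ψ x := by
  rw [Av_def, Av_def]
  exact div_le_div_of_nonneg_right (Finset.sum_le_sum fun q _ => h q) (by positivity)

lemma Av_congr {d : ℕ} {φ ψ : Pt d → ℝ} {x : Pt d} (h : ∀ q, φ (x + dv q) = ψ (x + dv q)) :
    Av d φ x = Av d ψ x := by
  rw [Av_def, Av_def]
  simp only [h]

lemma Av_nonneg {d : ℕ} {φ : Pt d → ℝ} {x : Pt d} (h : ∀ q, 0 ≤ φ (x + dv q)) :
    0 ≤ Av d φ x := by
  rw [Av_def]
  exact div_nonneg (Finset.sum_nonneg fun q _ => h q) (by positivity)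

lemma Av_add {d : ℕ} (φ ψ : Pt d → ℝ) (x : Pt d) :
    Av d (fun z => φ z + ψ z) x = Av d φ x + Av d ψ x := by
  rw [Av_def, Av_def, Av_def, Finset.sum_add_distrib, add_div]

lemma Av_sub {d : ℕ} (φ ψ : Pt d → ℝ) (x : Pt d) :
    Av d (fun z => φ z - ψ z) x = Av d φ x - Av d ψ x := by
  rw [Av_def, Av_def, Av_def, Finset.sum_sub_distrib, sub_div]

lemma Av_mul {d : ℕ} (c : ℝ) (φ : Pt d → ℝ) (x : Pt d) :
    Av d (fun z => c * φ z) x = c * Av d φ x := by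
  rw [Av_def, Av_def, ← Finset.mul_sum, mul_div_assoc]

lemma Av_sum {d : ℕ} {ι : Type*} (W : Finset ι) (φ : ι → Pt d → ℝ) (x : Pt d) :
    Av d (fun z => ∑ w ∈ W, φ w z) x = ∑ w ∈ W, Av d (φ w) x := by
  simp only [Av_def]
  rw [Finset.sum_comm, Finset.sum_div]

lemma Av_const {d : ℕ} (hd : 0 < d) (c : ℝ) (x : Pt d) : Av d (fun _ => c) x = c := by
  have : (d : ℝ) ≠ 0 := by positivity
  rw [Av_def]
  simp
  field_simp

lemma Av_ge_one {d : ℕ} {φ : Pt d → ℝ} {x : Pt d} (h : ∀ q, 0 ≤ φ (x + dv q))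
    (q : Fin d × Bool) : φ (x + dv q) / (2 * d) ≤ Av d φ x := by
  rw [Av_def]
  exact div_le_div_of_nonneg_right
    (Finset.single_le_sum (f := fun q => φ (x + dv q)) (fun q _ => h q) (Finset.mem_univ q))
    (by positivity)

lemma Av_shift {d : ℕ} (φ : Pt d → ℝ) (x w : Pt d) :
    Av d (fun z => φ (z - w)) x = Av d φ (x - w) := by
  rw [Av_def, Av_def]
  simp only [add_sub_right_comm]

/-! ### First hitting quantities -/

/-- `P_x(τ_W = t, φ(S_{τ - 1}))`. -/
noncomputable def HT (d : ℕ) (W : Set (Pt d)) (φ : Pt d → Prop) (t : ℕ) (x : Pt d) : ℝ :=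
  prob d t (fun s => 1 ≤ t ∧ wpos d x s t ∈ W ∧ φ (wpos d x s (t - 1)) ∧
    ∀ u, 1 ≤ u → u < t → wpos d x s u ∉ W)

open Classical in
/-- Recursive form of `P_x(τ_W ≤ T, φ(S_{τ - 1}))`. -/
noncomputable def HR (d : ℕ) (W : Set (Pt d)) (φ : Pt d → Prop) : ℕ → Pt d → ℝ
  | 0, _ => 0
  | T + 1, x => Av d (fun z => if z ∈ W then (if φ x then 1 else 0) else HR d W φ T z) x

/-- `P_x(τ_W < ∞, φ(S_{τ - 1}))`. -/
noncomputable def HL (d : ℕ) (W : Set (Pt d)) (φ : Pt d → Prop) (x : Pt d) : ℝ :=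
  ∑' t : ℕ, HT d W φ t x

lemma HT_nonneg (d : ℕ) (W : Set (Pt d)) (φ : Pt d → Prop) (t : ℕ) (x : Pt d) :
    0 ≤ HT d W φ t x := prob_nonneg _ _ _

lemma HT_zero (d : ℕ) (W : Set (Pt d)) (φ : Pt d → Prop) (x : Pt d) : HT d W φ 0 x = 0 := by
  classical
  unfold HT
  rw [prob_zero]
  simp

lemma prob_false (d T : ℕ) (P : (Fin T → Pt d) → Prop) (h : ∀ s, ¬ P s) : prob d T P = 0 := by
  unfold prob
  have : IsEmpty {s : Fin T → Pt d // (∀ i, s i ∈ Dir d) ∧ P s} := ⟨fun s => h _ s.2.2⟩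
  simp

open Classical in
lemma HT_succ (d : ℕ) (W : Set (Pt d)) (φ : Pt d → Prop) (t : ℕ) (x : Pt d) :
    HT d W φ (t + 1) x =
      Av d (fun z => if z ∈ W then (if t = 0 ∧ φ x then 1 else 0) else HT d W φ t z) x := by
  rw [Av_def]
  unfold HT
  rw [prob_succ]
  congr 1
  apply Finset.sum_congr rfl
  intro q _
  rcases t with _ | t
  · rw [prob_zero]
    simp only [Nat.add_sub_cancel]
    have e1 := wpos_cons d x (dv q) (![] : Fin 0 → Pt d) 0
    rw [wpos_zero] at e1
    have e2 : ∀ u, 1 ≤ u → ¬ u < 0 + 1 := by intro u; omega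
    simp only [zero_add] at e1 ⊢
    rw [e1, wpos_zero]
    by_cases hW : x + dv q ∈ W
    · simp only [hW, if_true, true_and]
      congr 1
      apply propext
      constructor
      · rintro ⟨_, h, _⟩; exact h
      · intro h; exact ⟨le_rfl, h, fun u h1 h2 => absurd h2 (by omega)⟩
    · simp only [hW, if_false]
      symm
      rw [prob_zero]
      simp
  · by_cases hW : x + dv q ∈ W
    · rw [if_pos hW, if_neg (by simp)]
      apply prob_false
      rintro s ⟨_, _, _, h⟩
      have := h 1 le_rfl (by omega)
      have e1 := wpos_cons d x (dv q) s 0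
      rw [wpos_zero] at e1
      exact this (e1 ▸ hW)
    · rw [if_neg hW]
      congr 1
      funext s
      apply propext
      simp only [Nat.add_sub_cancel, wpos_cons]
      constructor
      · rintro ⟨_, h1, h2, h3⟩
        refine ⟨by omega, h1, h2, fun u hu hu' => ?_⟩
        have := h3 (u + 1) (by omega) (by omega)
        rwa [wpos_cons] at this
      · rintro ⟨_, h1, h2, h3⟩
        refine ⟨by omega, h1, h2, fun u hu hu' => ?_⟩
        obtain ⟨v, rfl⟩ : ∃ v, u = v + 1 := ⟨u - 1, by omega⟩
        rw [wpos_cons]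
        rcases v with _ | v
        · rwa [wpos_zero]
        · exact h3 _ (by omega) (by omega)

lemma sum_HT (d : ℕ) (W : Set (Pt d)) (φ : Pt d → Prop) (T : ℕ) (x : Pt d) :
    ∑ t ∈ Finset.range (T + 1), HT d W φ t x = HR d W φ T x := by
  classical
  induction T generalizing x with
  | zero => simp [HT_zero, HR]
  | succ T ih =>
    rw [Finset.sum_range_succ', HT_zero, add_zero]
    simp only [HT_succ, HR]
    rw [← Av_sum]
    apply Av_congr
    intro q
    by_cases hW : x + dv q ∈ W
    · simp only [hW, if_true]
      rw [Finset.sum_eq_single 0]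
      · simp
      · intro b _ hb; simp [hb]
      · simp
    · simp only [hW, if_false]
      exact ih _

lemma HR_nonneg (d : ℕ) (W : Set (Pt d)) (φ : Pt d → Prop) (T : ℕ) (x : Pt d) :
    0 ≤ HR d W φ T x := by
  rw [← sum_HT]
  exact Finset.sum_nonneg fun t _ => HT_nonneg _ _ _ _ _

/-- Comparison with supersolutions. -/
lemma HR_le_super {d : ℕ} (W : Set (Pt d)) (φ : Pt d → Prop) (f : Pt d → ℝ)
    (h0 : ∀ x, 0 ≤ f x) (hW : ∀ x ∈ W, 1 ≤ f x) (hf : ∀ x, Av d f x ≤ f x) (T : ℕ) (x : Pt d) :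
    HR d W φ T x ≤ f x := by
  classical
  induction T generalizing x with
  | zero => exact h0 x
  | succ T ih =>
    refine le_trans (Av_mono ?_) (hf x)
    intro q
    by_cases h : x + dv q ∈ W
    · simp only [h, if_true]
      refine le_trans ?_ (hW _ h)
      split_ifs <;> norm_num
    · simp only [h, if_false]
      exact ih _

lemma HR_le_one {d : ℕ} (hd : 0 < d) (W : Set (Pt d)) (φ : Pt d → Prop) (T : ℕ) (x : Pt d) :
    HR d W φ T x ≤ 1 :=
  HR_le_super W φ (fun _ => 1) (by simp) (by simp) (fun x => (Av_const hd 1 x).le) T x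

lemma HT_summable {d : ℕ} (hd : 0 < d) (W : Set (Pt d)) (φ : Pt d → Prop) (x : Pt d) :
    Summable (fun t => HT d W φ t x) := by
  apply summable_of_sum_range_le (c := 1) (fun t => HT_nonneg _ _ _ _ _)
  intro n
  rcases n with _ | n
  · simp
  · rw [sum_HT]; exact HR_le_one hd _ _ _ _

lemma HR_tendsto {d : ℕ} (hd : 0 < d) (W : Set (Pt d)) (φ : Pt d → Prop) (x : Pt d) :
    Filter.Tendsto (fun T => HR d W φ T x) Filter.atTop (nhds (HL d W φ x)) := by
  have := (HT_summable hd W φ x).hasSum.tendsto_sum_nat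
  have h2 := this.comp (Filter.tendsto_add_atTop_nat 1)
  refine h2.congr fun T => ?_
  exact sum_HT d W φ T x

lemma HR_le_HL {d : ℕ} (hd : 0 < d) (W : Set (Pt d)) (φ : Pt d → Prop) (T : ℕ) (x : Pt d) :
    HR d W φ T x ≤ HL d W φ x := by
  rw [← sum_HT]
  exact (HT_summable hd W φ x).sum_le_tsum _ (fun t _ => HT_nonneg _ _ _ _ _)

lemma HL_le {d : ℕ} (hd : 0 < d) (W : Set (Pt d)) (φ : Pt d → Prop) (x : Pt d) {B : ℝ}
    (h : ∀ T, HR d W φ T x ≤ B) : HL d W φ x ≤ B :=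
  le_of_tendsto' (HR_tendsto hd W φ x) h

lemma HL_nonneg {d : ℕ} (W : Set (Pt d)) (φ : Pt d → Prop) (x : Pt d) : 0 ≤ HL d W φ x :=
  tsum_nonneg fun t => HT_nonneg _ _ _ _ _

open Classical in
lemma HL_eq {d : ℕ} (hd : 0 < d) (W : Set (Pt d)) (φ : Pt d → Prop) (x : Pt d) :
    HL d W φ x = Av d (fun z => if z ∈ W then (if φ x then 1 else 0) else HL d W φ z) x := by
  have h1 := (HR_tendsto hd W φ x).comp (Filter.tendsto_add_atTop_nat 1)
  refine tendsto_nhds_unique h1 ?_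
  have h2 : ((fun T => HR d W φ T x) ∘ fun a => a + 1) = fun T =>
      Av d (fun z => if z ∈ W then (if φ x then 1 else 0) else HR d W φ T z) x := by
    funext T; simp [HR]
  rw [h2]
  simp only [Av_def]
  apply Filter.Tendsto.div_const
  apply tendsto_finsetSum
  intro q _
  split_ifs
  · exact tendsto_const_nhds
  · exact tendsto_const_nhds
  · exact HR_tendsto hd W φ _

lemma retProb_eq (d : ℕ) (W : Set (Pt d)) (x : Pt d) :
    retProb d W x = HL d W (fun _ => True) x := by
  simp [retProb, HL, HT]

lemma hitFrom_eq (d : ℕ) (W : Set (Pt d)) (x y : Pt d) :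
    hitFrom d W x y = HL d W (fun z => z = y) x := rfl

lemma esc_prob (d : ℕ) (hd : 0 < d) (A : Set (Pt d)) (x : Pt d) (T : ℕ) :
    prob d T (fun s => ∀ t, 1 ≤ t → t ≤ T → wpos d x s t ∉ A) =
      1 - HR d A (fun _ => True) T x := by
  classical
  induction T generalizing x with
  | zero => rw [prob_zero]; simp only [HR]; rw [if_pos]; · simp
            intro t h1 h2; omega
  | succ T ih =>
    simp only [HR, if_true]
    have e : ∀ r : ℝ, 1 - r = Av d (fun _ => 1) x - r := fun r => by rw [Av_const hd 1 x]
    rw [e, ← Av_sub, prob_succ, Av_def]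
    congr 1
    apply Finset.sum_congr rfl
    intro q _
    by_cases hW : x + dv q ∈ A
    · simp only [hW, if_true, sub_self]
      apply prob_false
      intro s h
      have := h 1 le_rfl (by omega)
      have e1 := wpos_cons d x (dv q) s 0
      rw [wpos_zero] at e1
      exact this (e1 ▸ hW)
    · simp only [hW, if_false]
      rw [← ih]
      congr 1
      funext s
      apply propext
      constructor
      · intro h u hu hu'
        have := h (u + 1) (by omega) (by omega)
        rwa [wpos_cons] at this
      · intro h u hu hu'
        obtain ⟨v, rfl⟩ : ∃ v, u = v + 1 := ⟨u - 1, by omega⟩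
        rw [wpos_cons]
        rcases v with _ | v
        · rwa [wpos_zero]
        · exact h _ (by omega) (by omega)

lemma esc_eq {d : ℕ} (hd : 0 < d) (A : Set (Pt d)) (x : Pt d) (hx : x ∈ A) :
    esc d A x = 1 - HL d A (fun _ => True) x := by
  unfold esc
  rw [if_pos hx]
  simp only [esc_prob d hd]
  apply le_antisymm
  · have h1 : Filter.Tendsto (fun T => 1 - HR d A (fun _ => True) T x) Filter.atTop
      (nhds (1 - HL d A (fun _ => True) x)) := (HR_tendsto hd A _ x).const_sub 1
    refine ge_of_tendsto' h1 fun T => ?_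
    refine ciInf_le ⟨0, ?_⟩ T
    rintro _ ⟨T, rfl⟩
    have := HR_le_one hd A (fun _ => True) T x
    simp only; linarith
  · refine le_ciInf fun T => ?_
    have := HR_le_HL hd A (fun _ => True) T x
    linarith

lemma HL_le_one {d : ℕ} (hd : 0 < d) (W : Set (Pt d)) (φ : Pt d → Prop) (x : Pt d) :
    HL d W φ x ≤ 1 := HL_le hd W φ x fun T => HR_le_one hd W φ T x

/-- Abbreviation for the return probability. -/
noncomputable abbrev RL (d : ℕ) (W : Set (Pt d)) (x : Pt d) : ℝ := HL d W (fun _ => True) x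

lemma HL_le_RL {d : ℕ} (hd : 0 < d) (W : Set (Pt d)) (φ : Pt d → Prop) (x : Pt d) :
    HL d W φ x ≤ RL d W x := by
  classical
  refine HL_le hd W φ x fun T => le_trans ?_ (HR_le_HL hd W _ T x)
  induction T generalizing x with
  | zero => simp [HR]
  | succ T ih =>
    refine Av_mono fun q => ?_
    by_cases hW : x + dv q ∈ W
    · simp only [hW, if_true]; split_ifs <;> norm_num
    · simp only [hW, if_false]; exact ih _

lemma RL_mono {d : ℕ} (hd : 0 < d) {W V : Set (Pt d)} (h : W ⊆ V) (x : Pt d) :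
    RL d W x ≤ RL d V x := by
  classical
  refine HL_le hd W _ x fun T => le_trans ?_ (HR_le_HL hd V _ T x)
  induction T generalizing x with
  | zero => simp [HR]
  | succ T ih =>
    refine Av_mono fun q => ?_
    by_cases hW : x + dv q ∈ W
    · simp [hW, h hW]
    · simp only [hW, if_false]
      split_ifs
      · exact HR_le_one hd _ _ _ _
      · exact ih _

lemma RL_union {d : ℕ} (hd : 0 < d) (W V : Set (Pt d)) (x : Pt d) :
    RL d (W ∪ V) x ≤ RL d W x + RL d V x := by
  classical
  refine HL_le hd _ _ x fun T => le_trans ?_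
    (add_le_add (HR_le_HL hd W _ T x) (HR_le_HL hd V _ T x))
  induction T generalizing x with
  | zero => simp [HR]
  | succ T ih =>
    simp only [HR]
    rw [← Av_add]
    refine Av_mono fun q => ?_
    have p1 := HR_nonneg d W (fun _ => True) T (x + dv q)
    have p2 := HR_nonneg d V (fun _ => True) T (x + dv q)
    by_cases hW : x + dv q ∈ W <;> by_cases hV : x + dv q ∈ V <;> simp [hW, hV]
    · exact p2
    · exact p1
    · exact ih _

lemma hit_union {d : ℕ} (hd : 0 < d) (W V : Set (Pt d)) (φ : Pt d → Prop) (M : ℝ) (hM : 0 ≤ M)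
    (h : ∀ v ∈ V, RL d W v ≤ M) (x : Pt d) :
    HL d W φ x ≤ HL d (W ∪ V) φ x + M * RL d V x := by
  classical
  refine HL_le hd _ _ x fun T => le_trans ?_
    (add_le_add (HR_le_HL hd _ _ T x) (mul_le_mul_of_nonneg_left (HR_le_HL hd V _ T x) hM))
  induction T generalizing x with
  | zero => simp [HR]
  | succ T ih =>
    simp only [HR]
    rw [← Av_mul, ← Av_add]
    refine Av_mono fun q => ?_
    have p1 := HR_nonneg d (W ∪ V) φ T (x + dv q)
    have p2 := HR_nonneg d V (fun _ => True) T (x + dv q)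
    have p3 := HR_nonneg d W φ T (x + dv q)
    by_cases hW : x + dv q ∈ W <;> by_cases hV : x + dv q ∈ V
    · simp [hW, hV, hM]
    · simp only [hW, hV, Set.mem_union, true_or, if_true, if_false]
      have := mul_nonneg hM p2
      linarith
    · simp only [hW, hV, Set.mem_union, or_true, if_true, if_false]
      have h1 := HR_le_HL hd W φ T (x + dv q)
      have h2 := HL_le_RL hd W φ (x + dv q)
      have h3 := h _ hV
      have : (0 : ℝ) ≤ if φ x then 1 else 0 := by split_ifs <;> norm_num
      linarith
    · simp only [hW, hV, Set.mem_union, or_self, if_false]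
      exact ih _

/-- When a hitting contribution through `y` is nonzero. -/
lemma hit_pos {d : ℕ} (hd : 0 < d) (W : Set (Pt d)) (x y : Pt d) (hx : x ∉ W)
    (h : HL d W (fun z => z = y) x ≠ 0) : y ∉ W ∧ ∃ q, y + dv q ∈ W := by
  classical
  constructor
  · intro hy
    apply h
    apply le_antisymm _ (HL_nonneg _ _ _)
    refine HL_le hd _ _ _ fun T => ?_
    clear h
    induction T generalizing x with
    | zero => simp [HR]
    | succ T ih =>
      simp only [HR]
      refine le_of_le_of_eq (Av_mono fun q => ?_) (Av_const hd 0 x)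
      have hxy : x ≠ y := fun e => hx (e ▸ hy)
      by_cases hW : x + dv q ∈ W
      · simp [hW, hxy]
      · simp only [hW, if_false]
        exact ih _ hW
  · by_contra hne
    push Not at hne
    apply h
    apply le_antisymm _ (HL_nonneg _ _ _)
    refine HL_le hd _ _ _ fun T => ?_
    clear h hx
    induction T generalizing x with
    | zero => simp [HR]
    | succ T ih =>
      simp only [HR]
      refine le_of_le_of_eq (Av_mono fun q => ?_) (Av_const hd 0 x)
      by_cases hW : x + dv q ∈ W
      · have hxy : x ≠ y := fun e => hne q (e ▸ hW)
        simp [hW, hxy]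
      · simp only [hW, if_false]
        exact ih _

end HATFormal

namespace HATFormal

/-! ### Power functions and the discrete Laplacian -/

lemma rpow_taylor (α : ℝ) : ∃ K s0 : ℝ, 0 < K ∧ 0 < s0 ∧ s0 ≤ 1/2 ∧ ∀ s : ℝ, |s| ≤ s0 →
    |(1 + s) ^ (-α) - (1 - α * s + α * (α + 1) / 2 * s ^ 2 - α * (α + 1) * (α + 2) / 6 * s ^ 3)|
      ≤ K * s ^ 4 := by
  have h := (Real.one_add_rpow_hasFPowerSeriesAt_zero (a := -α)).isBigO_sub_partialSum_pow 4
  obtain ⟨K, hK, h2⟩ := h.exists_pos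
  rw [Asymptotics.IsBigOWith_def, Metric.eventually_nhds_iff] at h2
  obtain ⟨e, he, h3⟩ := h2
  refine ⟨K, min (e / 2) (1 / 2), hK, by positivity, min_le_right _ _, fun s hs => ?_⟩
  have h4 := @h3 s (by
    simp only [dist_zero_right, Real.norm_eq_abs]
    have := min_le_left (e / 2) (1 / 2); linarith)
  have e4 : ‖‖s‖ ^ 4‖ = s ^ 4 := by
    simp only [norm_pow, norm_norm, Real.norm_eq_abs]
    rw [show (4 : ℕ) = 2 * 2 by norm_num, pow_mul, pow_mul, abs_abs, sq_abs]
  rw [e4, Real.norm_eq_abs] at h4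
  convert h4 using 3
  · simp
  · simp only [FormalMultilinearSeries.partialSum, Finset.sum_range_succ, Finset.sum_range_zero,
      binomialSeries_apply]
    simp [Ring.choose_eq_smul, descPochhammer, Polynomial.smeval_mul, Polynomial.smeval_sub,
      Polynomial.smeval_X, Polynomial.smeval_one, Nat.factorial]
    ring

/-- Squared Euclidean norm. -/
noncomputable def NN {d : ℕ} (z : Pt d) : ℝ := ∑ i, (z i : ℝ) ^ 2

lemma NN_nonneg {d : ℕ} (z : Pt d) : 0 ≤ NN z := Finset.sum_nonneg fun i _ => sq_nonneg _

lemma NN_single {d : ℕ} (z : Pt d) (i : Fin d) (k : ℤ) :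
    NN (z + Pi.single i k) = NN z + 2 * k * z i + (k : ℝ) ^ 2 := by
  unfold NN
  rw [← Finset.add_sum_erase _ _ (Finset.mem_univ i),
    ← Finset.add_sum_erase (a := i) Finset.univ (fun i => (z i : ℝ) ^ 2) (Finset.mem_univ i)]
  have : ∑ x ∈ Finset.univ.erase i, (((z + Pi.single i k : Pt d) x : ℤ) : ℝ) ^ 2 =
      ∑ x ∈ Finset.univ.erase i, (z x : ℝ) ^ 2 := by
    apply Finset.sum_congr rfl
    intro j hj
    have : j ≠ i := Finset.ne_of_mem_erase hj
    simp [this]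
  rw [this]
  simp
  ring

lemma sq_le_NN {d : ℕ} (z : Pt d) (i : Fin d) : (z i : ℝ) ^ 2 ≤ NN z :=
  Finset.single_le_sum (f := fun i => (z i : ℝ) ^ 2) (fun i _ => sq_nonneg _) (Finset.mem_univ i)

lemma Av_pairs {d : ℕ} (φ : Pt d → ℝ) (x : Pt d) :
    Av d φ x = (∑ i : Fin d, (φ (x + Pi.single i 1) + φ (x + Pi.single i (-1)))) / (2 * d : ℝ) := by
  unfold Av
  rw [Fintype.sum_prod_type]
  simp

/-- Expansion of the discrete Laplacian of `(|z|² + M)^{-α}`, `α = (d-2)/2`. -/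
lemma lap_expand (d : ℕ) (hd : 3 ≤ d) : ∃ K U0 : ℝ, 0 < K ∧ 1 ≤ U0 ∧
    ∀ (M : ℝ) (z : Pt d), U0 ≤ NN z + M → |M| ≤ NN z + M →
      |2 * d * Av d (fun z => (NN z + M) ^ (-(((d : ℝ) - 2) / 2))) z -
        (NN z + M) ^ (-(((d : ℝ) - 2) / 2)) *
          (2 * d - 4 * (((d : ℝ) - 2) / 2) * (((d : ℝ) - 2) / 2 + 1) * M / (NN z + M) ^ 2)| ≤
      (NN z + M) ^ (-(((d : ℝ) - 2) / 2)) * (K / (NN z + M) ^ 2) := by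
  have hd0 : (3 : ℝ) ≤ d := by exact_mod_cast hd
  obtain ⟨α, hα⟩ : ∃ α : ℝ, α = ((d : ℝ) - 2) / 2 := ⟨_, rfl⟩
  have hdα : (d : ℝ) = 2 * α + 2 := by rw [hα]; ring
  have hα0 : 0 < α := by rw [hα]; linarith
  rw [← hα]
  obtain ⟨K, s0, hK, hs0, hs1, hT⟩ := rpow_taylor α
  set A3 := α * (α + 1) * (α + 2) / 6 with hA3
  have hA3p : 0 < A3 := by positivity
  refine ⟨α * (α + 1) * d + A3 * (2 * d + 48) + 1250 * d * K, max 1 ((5 / s0) ^ 2),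
    by positivity, le_max_left _ _, ?_⟩
  intro M z hu hM
  have hu1 : 1 ≤ NN z + M := le_trans (le_max_left _ _) hu
  have hu2 : (5 / s0) ^ 2 ≤ NN z + M := le_trans (le_max_right _ _) hu
  obtain ⟨u, hu'⟩ : ∃ u, u = NN z + M := ⟨_, rfl⟩
  rw [← hu'] at hu1 hu2 hM ⊢
  have hN : NN z = u - M := by rw [hu']; ring
  have hu0 : 0 < u := by linarith
  have hN2 : NN z ≤ 2 * u := by rw [hN]; have := neg_abs_le M; linarith
  have hN0 := NN_nonneg z
  -- pointwise bounds
  have hstep : ∀ (i : Fin d) (e : ℝ), e ^ 2 = 1 → |(2 * e * z i + 1) / u| ≤ s0 ∧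
      ((2 * e * z i + 1) / u) ^ 4 ≤ 625 / u ^ 2 := by
    intro i e he
    have hz := sq_le_NN z i
    have hsq : (2 * e * z i + 1) ^ 2 ≤ 25 * u := by
      have h1 : (2 * e * z i) ^ 2 = 4 * (z i : ℝ) ^ 2 := by rw [mul_pow, mul_pow, he]; ring
      have h2 : (2 * e * z i + 1) ^ 2 ≤ 2 * (2 * e * z i) ^ 2 + 2 := by
        nlinarith [sq_nonneg (2 * e * z i - 1)]
      linarith
    have hsq2 : ((2 * e * z i + 1) / u) ^ 2 ≤ 25 / u := by
      rw [div_pow, div_le_div_iff₀ (by positivity) hu0]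
      nlinarith
    constructor
    · apply abs_le_of_sq_le_sq _ hs0.le
      refine hsq2.trans ?_
      rw [div_le_iff₀ hu0]
      rw [div_pow, div_le_iff₀ (by positivity)] at hu2
      linarith
    · have : ((2 * e * z i + 1) / u) ^ 4 = (((2 * e * z i + 1) / u) ^ 2) ^ 2 := by ring
      rw [this]
      calc (((2 * e * z i + 1) / u) ^ 2) ^ 2 ≤ (25 / u) ^ 2 :=
            pow_le_pow_left₀ (sq_nonneg _) hsq2 2
        _ = 625 / u ^ 2 := by rw [div_pow]; norm_num
  have hval : ∀ (i : Fin d) (e : ℤ), (e : ℝ) ^ 2 = 1 →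
      (NN (z + Pi.single i e) + M) ^ (-α) =
        u ^ (-α) * (1 + (2 * e * z i + 1) / u) ^ (-α) := by
    intro i e he
    have h1 := (hstep i e he).1
    have h2 : (0 : ℝ) ≤ 1 + (2 * e * z i + 1) / u := by
      have := neg_abs_le ((2 * e * z i + 1) / u); linarith
    rw [← Real.mul_rpow hu0.le h2, NN_single, he, hN]
    congr 1
    field_simp
    ring
  have hAv : 2 * d * Av d (fun z => (NN z + M) ^ (-α)) z = u ^ (-α) *
      ∑ i : Fin d, ((1 + (2 * (1 : ℤ) * z i + 1) / u) ^ (-α) +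
        (1 + (2 * (-1 : ℤ) * z i + 1) / u) ^ (-α)) := by
    rw [Av_pairs, mul_div_cancel₀ _ (by positivity), Finset.mul_sum]
    apply Finset.sum_congr rfl
    intro i _
    rw [hval i 1 (by norm_num), hval i (-1) (by norm_num)]
    ring
  rw [hAv, ← mul_sub, abs_mul, abs_of_pos (Real.rpow_pos_of_pos hu0 _)]
  apply mul_le_mul_of_nonneg_left _ (Real.rpow_pos_of_pos hu0 _).le
  set T3 : ℝ → ℝ := fun s => 1 - α * s + α * (α + 1) / 2 * s ^ 2 - A3 * s ^ 3 with hT3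
  have hsumT : ∑ i : Fin d, (T3 ((2 * (1 : ℤ) * z i + 1) / u) +
      T3 ((2 * (-1 : ℤ) * z i + 1) / u)) =
      2 * d - 2 * α * d / u + α * (α + 1) * (d / u ^ 2 + 4 * NN z / u ^ 2)
        - A3 * (2 * d / u ^ 3 + 24 * NN z / u ^ 3) := by
    have : ∀ i : Fin d, T3 ((2 * (1 : ℤ) * z i + 1) / u) + T3 ((2 * (-1 : ℤ) * z i + 1) / u) =
        (2 - 2 * α / u + α * (α + 1) / u ^ 2 - 2 * A3 / u ^ 3) +
          (4 * α * (α + 1) / u ^ 2 - 24 * A3 / u ^ 3) * (z i : ℝ) ^ 2 := by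
      intro i
      simp only [hT3]
      push_cast
      field_simp
      ring
    rw [Finset.sum_congr rfl fun i _ => this i, Finset.sum_add_distrib, ← Finset.mul_sum]
    simp only [Finset.sum_const, Finset.card_univ, Fintype.card_fin, nsmul_eq_mul]
    change _ + _ * NN z = _
    ring
  have herr : |∑ i : Fin d, ((1 + (2 * (1 : ℤ) * z i + 1) / u) ^ (-α) +
        (1 + (2 * (-1 : ℤ) * z i + 1) / u) ^ (-α)) - ∑ i : Fin d,
        (T3 ((2 * (1 : ℤ) * z i + 1) / u) + T3 ((2 * (-1 : ℤ) * z i + 1) / u))| ≤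
      1250 * d * K / u ^ 2 := by
    rw [← Finset.sum_sub_distrib]
    refine (Finset.abs_sum_le_sum_abs _ _).trans ?_
    have : ∀ i ∈ (Finset.univ : Finset (Fin d)),
        |(1 + (2 * (1 : ℤ) * (z i : ℝ) + 1) / u) ^ (-α) +
        (1 + (2 * (-1 : ℤ) * (z i : ℝ) + 1) / u) ^ (-α) -
        (T3 ((2 * (1 : ℤ) * z i + 1) / u) + T3 ((2 * (-1 : ℤ) * z i + 1) / u))| ≤
        1250 * K / u ^ 2 := by
      intro i _
      obtain ⟨a1, a2⟩ := hstep i ((1 : ℤ) : ℝ) (by norm_num)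
      obtain ⟨b1, b2⟩ := hstep i ((-1 : ℤ) : ℝ) (by norm_num)
      have c1 := hT _ a1
      have c2 := hT _ b1
      have c3 := mul_le_mul_of_nonneg_left a2 hK.le
      have c4 := mul_le_mul_of_nonneg_left b2 hK.le
      rw [add_sub_add_comm]
      refine (abs_add_le _ _).trans ?_
      refine (add_le_add (c1.trans c3) (c2.trans c4)).trans (le_of_eq ?_)
      ring
    refine (Finset.sum_le_sum this).trans (le_of_eq ?_)
    simp only [Finset.sum_const, Finset.card_univ, Fintype.card_fin, nsmul_eq_mul]
    ring
  rw [hsumT] at herr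
  have hpoly : |(2 * d - 2 * α * d / u + α * (α + 1) * (d / u ^ 2 + 4 * NN z / u ^ 2)
        - A3 * (2 * d / u ^ 3 + 24 * NN z / u ^ 3)) -
        (2 * d - 4 * α * (α + 1) * M / u ^ 2)| ≤
      (α * (α + 1) * d + A3 * (2 * d + 48)) / u ^ 2 := by
    have e1 : (2 * d - 2 * α * d / u + α * (α + 1) * (d / u ^ 2 + 4 * NN z / u ^ 2)
        - A3 * (2 * d / u ^ 3 + 24 * NN z / u ^ 3)) -
        (2 * d - 4 * α * (α + 1) * M / u ^ 2) =
        α * (α + 1) * d / u ^ 2 - A3 * (2 * d + 24 * NN z) / u / u ^ 2 := by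
      have hM' : M = u - NN z := by rw [hN]; ring
      rw [hM', hdα]
      field_simp
      ring
    rw [e1]
    have e2 : A3 * (2 * d + 24 * NN z) / u ≤ A3 * (2 * d + 48) := by
      rw [div_le_iff₀ hu0, mul_assoc]
      apply mul_le_mul_of_nonneg_left _ hA3p.le
      nlinarith
    have e3 : A3 * (2 * d + 24 * NN z) / u / u ^ 2 ≤ A3 * (2 * d + 48) / u ^ 2 :=
      div_le_div_of_nonneg_right e2 (by positivity)
    have e4 : 0 ≤ A3 * (2 * d + 24 * NN z) / u / u ^ 2 := by positivity
    have e5 : 0 ≤ α * (α + 1) * d / u ^ 2 := by positivity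
    have e6 : 0 ≤ A3 * (2 * d + 48) / u ^ 2 := by positivity
    rw [add_div, abs_le]
    constructor <;> linarith
  have := abs_sub_le (∑ i : Fin d, ((1 + (2 * (1 : ℤ) * (z i : ℝ) + 1) / u) ^ (-α) +
        (1 + (2 * (-1 : ℤ) * (z i : ℝ) + 1) / u) ^ (-α)))
     (2 * d - 2 * α * d / u + α * (α + 1) * (d / u ^ 2 + 4 * NN z / u ^ 2)
        - A3 * (2 * d / u ^ 3 + 24 * NN z / u ^ 3)) (2 * d - 4 * α * (α + 1) * M / u ^ 2)
  refine this.trans ((add_le_add herr hpoly).trans (le_of_eq ?_))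
  ring

/-- The exponent `(d-2)/2`. -/
noncomputable def al (d : ℕ) : ℝ := ((d : ℝ) - 2) / 2

lemma exists_M (d : ℕ) (hd : 3 ≤ d) : ∃ M : ℝ, 100 ≤ M ∧
    (∀ z : Pt d, Av d (fun z => (NN z + M) ^ (-al d)) z ≤ (NN z + M) ^ (-al d)) ∧
    (∀ z : Pt d, 2 * M ≤ NN z →
      (NN z - M) ^ (-al d) ≤ Av d (fun z => (NN z - M) ^ (-al d)) z) := by
  obtain ⟨K, U0, hK, hU, h⟩ := lap_expand d hd
  have hd0 : (3 : ℝ) ≤ d := by exact_mod_cast hd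
  have hα0 : 0 < al d := by unfold al; linarith
  set B := 4 * al d * (al d + 1) with hB
  have hBp : 0 < B := by positivity
  refine ⟨max 100 (max U0 (K / B)), le_max_left _ _, ?_, ?_⟩
  all_goals
    obtain ⟨M, hM⟩ : ∃ M, M = max 100 (max U0 (K / B)) := ⟨_, rfl⟩
    rw [← hM]
    have h1 : 100 ≤ M := hM ▸ le_max_left _ _
    have h2 : U0 ≤ M := hM ▸ (le_max_left _ _).trans (le_max_right _ _)
    have h3 : K ≤ B * M := by
      have : K / B ≤ M := hM ▸ (le_max_right _ _).trans (le_max_right _ _)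
      rw [div_le_iff₀ hBp] at this; linarith
    intro z
    have hN := NN_nonneg z
  · have := h M z (by linarith) (by rw [abs_of_nonneg] <;> linarith)
    change |_ - (NN z + M) ^ (-al d) * (2 * d - B * M / _)| ≤ _ at this
    have h4 := (abs_le.1 this).2
    have hp : 0 < (NN z + M) ^ (-al d) := Real.rpow_pos_of_pos (by linarith) _
    have h5 : K / (NN z + M) ^ 2 ≤ B * M / (NN z + M) ^ 2 :=
      div_le_div_of_nonneg_right h3 (by positivity)
    have h6 := mul_le_mul_of_nonneg_left h5 hp.le
    change 2 * d * Av d (fun z => (NN z + M) ^ (-al d)) z - _ ≤ (NN z + M) ^ (-al d) * _ at h4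
    have h7 : 2 * d * Av d (fun z => (NN z + M) ^ (-al d)) z ≤
        2 * d * (NN z + M) ^ (-al d) := by linarith
    exact le_of_mul_le_mul_left h7 (by positivity)
  · intro hz
    have := h (-M) z (by linarith) (by rw [abs_of_nonpos] <;> linarith)
    change |_ - (NN z + -M) ^ (-al d) * (2 * d - B * (-M) / _)| ≤ _ at this
    simp only [← sub_eq_add_neg] at this
    have h4 := (abs_le.1 this).1
    have hp : 0 < (NN z - M) ^ (-al d) := Real.rpow_pos_of_pos (by linarith) _
    have h5 : K / (NN z - M) ^ 2 ≤ B * M / (NN z - M) ^ 2 :=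
      div_le_div_of_nonneg_right h3 (by positivity)
    have h6 := mul_le_mul_of_nonneg_left h5 hp.le
    change _ ≤ 2 * d * Av d (fun z => (NN z - M) ^ (-al d)) z - _ at h4
    change -((NN z - M) ^ (-al d) * _) ≤ _ at h4
    have e : B * -M / (NN z - M) ^ 2 = - (B * M / (NN z - M) ^ 2) := by ring
    rw [e] at h4
    have h7 : 2 * d * (NN z - M) ^ (-al d) ≤
        2 * d * Av d (fun z => (NN z - M) ^ (-al d)) z := by linarith
    exact le_of_mul_le_mul_left h7 (by positivity)

end HATFormal

namespace HATFormal

/-! ### Hitting upper bound, maximum principle, and lower bounds -/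

lemma RL_upper {d : ℕ} (hd : 0 < d) (M : ℝ) (hM : 100 ≤ M)
    (hsup : ∀ z : Pt d, Av d (fun z => (NN z + M) ^ (-al d)) z ≤ (NN z + M) ^ (-al d))
    (W : Finset (Pt d)) (x : Pt d) :
    RL d (↑W) x ≤ ∑ w ∈ W, M ^ (al d) * (NN (x - w) + M) ^ (-al d) := by
  refine HL_le hd _ _ x fun T => ?_
  have hp : ∀ z : Pt d, 0 ≤ (NN z + M) ^ (-al d) := fun z =>
    Real.rpow_nonneg (by have := NN_nonneg z; linarith) _
  refine HR_le_super (↑W) _ (fun x => ∑ w ∈ W, M ^ (al d) * (NN (x - w) + M) ^ (-al d))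
    ?_ ?_ ?_ T x
  · intro z
    exact Finset.sum_nonneg fun w _ => mul_nonneg (Real.rpow_nonneg (by linarith) _) (hp _)
  · intro z hz
    have h1 := Finset.single_le_sum (f := fun w => M ^ (al d) * (NN (z - w) + M) ^ (-al d))
      (fun w _ => mul_nonneg (Real.rpow_nonneg (by linarith) _) (hp _)) (Finset.mem_coe.1 hz)
    refine le_trans (le_of_eq ?_) h1
    simp only [sub_self]
    rw [show NN (0 : Pt d) = 0 by simp [NN], zero_add, ← Real.rpow_add (by linarith)]
    simp
  · intro z
    rw [Av_sum]
    refine Finset.sum_le_sum fun w _ => ?_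
    rw [Av_mul, Av_shift (fun z => (NN z + M) ^ (-al d))]
    exact mul_le_mul_of_nonneg_left (hsup _) (Real.rpow_nonneg (by linarith) _)

lemma max_principle {d : ℕ} (hd : 0 < d) (φ : Pt d → ℝ)
    (hfin : ∀ ε > 0, {z | ε ≤ φ z}.Finite)
    (hsub : ∀ z, 0 < φ z → φ z ≤ Av d φ z) (z : Pt d) : φ z ≤ 0 := by
  by_contra hz
  push Not at hz
  have hne : {w | φ z ≤ φ w}.Nonempty := ⟨z, le_refl (φ z)⟩
  obtain ⟨m, hm, hmax⟩ := Set.exists_max_image _ φ (hfin _ hz) hne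
  have hm0 : 0 < φ m := lt_of_lt_of_le hz hm
  have hall : ∀ w, φ w ≤ φ m := by
    intro w
    by_cases h : φ z ≤ φ w
    · exact hmax w h
    · push Not at h; exact h.le.trans hm
  let i0 : Fin d := ⟨0, hd⟩
  obtain ⟨p, hp, hpmax⟩ := Set.exists_max_image {w | φ m ≤ φ w} (fun w => w i0) (hfin _ hm0)
    ⟨m, le_refl (φ m)⟩
  have hpm : φ p = φ m := le_antisymm (hall p) hp
  have hlt : φ (p + dv (i0, true)) < φ m := by
    by_contra hge
    push Not at hge
    have := hpmax _ hge
    simp [dv] at this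
  have h1 := hsub p (hpm ▸ hm0)
  have h2 : Av d φ p < Av d (fun _ => φ m) p := by
    rw [Av_def, Av_def]
    apply div_lt_div_of_pos_right _ (by positivity)
    exact Finset.sum_lt_sum (fun q _ => hall _) ⟨(i0, true), Finset.mem_univ _, hlt⟩
  rw [Av_const hd] at h2
  linarith

lemma NN_finite (d : ℕ) (B : ℝ) : {z : Pt d | NN z ≤ B}.Finite := by
  obtain ⟨k, hk⟩ := exists_nat_ge B
  apply (Set.finite_Icc (fun _ => -(k : ℤ) : Pt d) (fun _ => (k : ℤ))).subset
  intro z hz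
  have h : ∀ i, z i ^ 2 ≤ (k : ℤ) := by
    intro i
    have := (sq_le_NN z i).trans (hz.trans hk)
    exact_mod_cast this
  constructor <;> intro i
  · have := h i; simp only; nlinarith
  · have := h i; simp only; nlinarith

lemma NN_finite' (d : ℕ) (B : ℝ) (y : Pt d) : {z : Pt d | NN (z - y) ≤ B}.Finite := by
  have := (NN_finite d B).preimage (f := fun z => z - y) (by intro a _ b _ h; simpa using h)
  exact this

/-- A direction along which one can move away from a two-point set. -/
lemma exists_direction {d : ℕ} (hd : 5 ≤ d) (B : Finset (Pt d)) (hB : B.card ≤ 2) (x : Pt d)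
    (hx : x ∉ B) (R : ℕ) (hR : 0 < R) :
    ∃ i : Fin d, (∀ k : ℕ, x + Pi.single i (k : ℤ) ∉ B) ∧
      ∀ a ∈ B, (R : ℝ) ^ 2 ≤ NN (x + Pi.single i ((2 * R : ℕ) : ℤ) - a) := by
  classical
  let dom : Pt d → Finset (Fin d) := fun a =>
    Finset.univ.filter (fun i => ∀ j, j ≠ i → |a j - x j| < a i - x i)
  have hdom : ∀ a, (dom a).card ≤ 1 := by
    intro a
    rw [Finset.card_le_one]
    intro i hi j hj
    by_contra hne
    have h1 := (Finset.mem_filter.1 hi).2 j (Ne.symm hne)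
    have h2 := (Finset.mem_filter.1 hj).2 i hne
    have := le_abs_self (a i - x i)
    have := le_abs_self (a j - x j)
    omega
  have hcard : (B.biUnion dom).card ≤ 2 := by
    refine (Finset.card_biUnion_le_card_mul _ _ 1 (fun a _ => hdom a)).trans ?_
    omega
  obtain ⟨i, -, hi⟩ : ∃ i ∈ (Finset.univ : Finset (Fin d)), i ∉ B.biUnion dom := by
    apply Finset.exists_mem_notMem_of_card_lt_card
    rw [Finset.card_univ, Fintype.card_fin]; omega
  have hi' : ∀ a ∈ B, ∃ j, j ≠ i ∧ a i - x i ≤ |a j - x j| := by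
    intro a ha
    by_contra hne
    push Not at hne
    exact hi (Finset.mem_biUnion.2 ⟨a, ha, Finset.mem_filter.2 ⟨Finset.mem_univ _, hne⟩⟩)
  refine ⟨i, ?_, ?_⟩
  · intro k hk
    obtain ⟨j, hj, h⟩ := hi' _ hk
    simp [hj] at h
    subst h
    simp at hk
    exact hx hk
  · intro a ha
    obtain ⟨j, hj, h⟩ := hi' _ ha
    have h1 := sq_le_NN (x + Pi.single i ((2 * R : ℕ) : ℤ) - a) i
    have h2 := sq_le_NN (x + Pi.single i ((2 * R : ℕ) : ℤ) - a) j
    by_cases hc : (R : ℤ) ≤ |a j - x j|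
    · refine le_trans ?_ h2
      have e : (x + Pi.single i ((2 * R : ℕ) : ℤ) - a : Pt d) j = -(a j - x j) := by
        simp [hj]
      rw [e]
      have : (R : ℤ) ^ 2 ≤ (-(a j - x j)) ^ 2 := by
        rw [neg_sq, ← sq_abs (a j - x j)]
        exact pow_le_pow_left₀ (by positivity) hc 2
      exact_mod_cast this
    · refine le_trans ?_ h1
      have e : (x + Pi.single i ((2 * R : ℕ) : ℤ) - a : Pt d) i = 2 * R - (a i - x i) := by
        simp; ring
      rw [e]
      push Not at hc
      have : (R : ℤ) ^ 2 ≤ (2 * R - (a i - x i)) ^ 2 :=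
        pow_le_pow_left₀ (by positivity) (by omega) 2
      exact_mod_cast this

/-- Propagation along a straight segment. -/
lemma segment_prop {d : ℕ} (g : Pt d → ℝ) (W : Set (Pt d)) (c : ℝ) (hc : 0 ≤ c)
    (hg : ∀ z q, z + dv q ∉ W → c * g (z + dv q) ≤ g z) (x : Pt d) (i : Fin d)
    (hx : ∀ k : ℕ, 1 ≤ k → x + Pi.single i (k : ℤ) ∉ W) (k : ℕ) :
    c ^ k * g (x + Pi.single i (k : ℤ)) ≤ g x := by
  induction k with
  | zero => simp
  | succ k ih =>
    have e : x + Pi.single i ((k + 1 : ℕ) : ℤ) = x + Pi.single i (k : ℤ) + dv (i, true) := by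
      simp [dv, Pi.single_add, add_assoc]
    have h1 := hg (x + Pi.single i (k : ℤ)) (i, true) (by rw [← e]; exact hx _ (by omega))
    rw [← e] at h1
    refine le_trans ?_ ih
    rw [pow_succ, mul_assoc]
    exact mul_le_mul_of_nonneg_left h1 (by positivity)

/-- Propagation along a straight segment, backwards. -/
lemma segment_prop_rev {d : ℕ} (g : Pt d → ℝ) (W : Set (Pt d)) (c : ℝ) (hc : 0 ≤ c)
    (hg : ∀ z q, z + dv q ∉ W → c * g (z + dv q) ≤ g z) (x : Pt d) (i : Fin d)
    (hx : ∀ k : ℕ, x + Pi.single i (k : ℤ) ∉ W) (k : ℕ) :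
    c ^ k * g x ≤ g (x + Pi.single i (k : ℤ)) := by
  induction k with
  | zero => simp
  | succ k ih =>
    have e : x + Pi.single i ((k + 1 : ℕ) : ℤ) + dv (i, false) = x + Pi.single i (k : ℤ) := by
      have : (Pi.single i (-1 : ℤ) : Pt d) = - Pi.single i 1 := by rw [Pi.single_neg]
      simp [dv, Pi.single_add, add_assoc, this]
    have h1 := hg (x + Pi.single i ((k + 1 : ℕ) : ℤ)) (i, false) (by rw [e]; exact hx _)
    rw [e] at h1
    refine le_trans ?_ h1
    rw [pow_succ', mul_assoc]
    exact mul_le_mul_of_nonneg_left ih (by positivity)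

/-- Propagation inside a ball. -/
lemma ball_prop {d : ℕ} (g : Pt d → ℝ) (W : Set (Pt d)) (c : ℝ) (hc : 0 ≤ c) (hc1 : c ≤ 1)
    (hg : ∀ z q, z + dv q ∉ W → c * g (z + dv q) ≤ g z) (hg0 : ∀ z, 0 ≤ g z) (y : Pt d) (m : ℕ)
    (hy : ∀ z, NN (z - y) ≤ m → z ∉ W) (z : Pt d) (hz : NN (z - y) ≤ m) :
    c ^ m * g y ≤ g z := by
  induction m generalizing z with
  | zero =>
    have : z = y := by
      funext i
      have h1 := sq_le_NN (z - y) i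
      have h2 : (((z - y) i : ℤ) : ℝ) ^ 2 ≤ 0 := by
        refine h1.trans (by simpa using hz)
      have h3 : (((z - y) i : ℤ) : ℝ) = 0 := by nlinarith
      have h4 : (z - y) i = 0 := by exact_mod_cast h3
      simpa [sub_eq_zero] using h4
    simp [this]
  | succ m ih =>
    by_cases hzy : z = y
    · subst hzy
      have : c ^ (m + 1) ≤ 1 := pow_le_one₀ hc hc1
      nlinarith [hg0 z]
    · obtain ⟨i, hi⟩ : ∃ i, z i ≠ y i := by
        by_contra h; push Not at h; exact hzy (funext h)
      have key : ∃ q : Fin d × Bool, NN (z + dv q - y) ≤ m := by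
        rcases lt_or_gt_of_ne hi with h | h
        · refine ⟨(i, true), ?_⟩
          have e : z + dv (i, true) - y = (z - y) + Pi.single i 1 := by
            simp [dv]; abel
          rw [e, NN_single]
          have h' : (((z - y) i : ℤ) : ℝ) ≤ -1 := by
            have : (z - y) i ≤ -1 := by simp; omega
            exact_mod_cast this
          push_cast at hz ⊢
          linarith
        · refine ⟨(i, false), ?_⟩
          have e : z + dv (i, false) - y = (z - y) + Pi.single i (-1) := by
            simp [dv]; abel
          rw [e, NN_single]
          have h' : (1 : ℝ) ≤ (((z - y) i : ℤ) : ℝ) := by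
            have : 1 ≤ (z - y) i := by simp; omega
            exact_mod_cast this
          push_cast at hz ⊢
          linarith
      obtain ⟨q, hq⟩ := key
      have hy' : ∀ w, NN (w - y) ≤ m → w ∉ W := fun w hw =>
        hy w (hw.trans (by push_cast; linarith))
      have h1 := ih hy' _ hq
      have h2 := hg z q (hy' _ hq)
      refine le_trans ?_ h2
      rw [pow_succ', mul_assoc]
      exact mul_le_mul_of_nonneg_left h1 hc

lemma HL_step {d : ℕ} (hd : 0 < d) (W : Set (Pt d)) (φ : Pt d → Prop) (z : Pt d)
    (q : Fin d × Bool) (h : z + dv q ∉ W) :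
    (1 / (2 * d : ℝ)) * HL d W φ (z + dv q) ≤ HL d W φ z := by
  classical
  rw [HL_eq hd W φ z]
  have := Av_ge_one (φ := fun w => if w ∈ W then (if φ z then (1 : ℝ) else 0) else HL d W φ w)
    (x := z) (by
      intro q
      have := HL_nonneg W φ (z + dv q)
      split_ifs <;> first | assumption | norm_num) q
  simp only [h, if_false] at this
  refine le_trans (le_of_eq ?_) this
  ring

lemma RL_step {d : ℕ} (hd : 0 < d) (W : Set (Pt d)) (z : Pt d)
    (q : Fin d × Bool) (h : z + dv q ∉ W) :
    (1 / (2 * d : ℝ)) * (1 - RL d W (z + dv q)) ≤ 1 - RL d W z := by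
  classical
  have e : 1 - RL d W z = Av d (fun w => 1 - if w ∈ W then 1 else RL d W w) z := by
    rw [Av_sub, Av_const hd, RL, HL_eq hd W _ z]
    simp
  rw [e]
  have := Av_ge_one (φ := fun w => 1 - if w ∈ W then (1 : ℝ) else RL d W w)
    (x := z) (by
      intro q
      have := HL_le_one hd W (fun _ => True) (z + dv q)
      split_ifs
      · norm_num
      · simp only [RL]; linarith) q
  simp only [h, if_false] at this
  refine le_trans (le_of_eq ?_) this
  ring

end HATFormal

namespace HATFormal

lemma NN_neg {d : ℕ} (x : Pt d) : NN (-x) = NN x := by simp [NN]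

lemma NN_sub_comm {d : ℕ} (x y : Pt d) : NN (x - y) = NN (y - x) := by
  rw [← NN_neg, neg_sub]

lemma NN_add_le {d : ℕ} (x y : Pt d) : NN (x + y) ≤ 2 * NN x + 2 * NN y := by
  unfold NN
  rw [Finset.mul_sum, Finset.mul_sum, ← Finset.sum_add_distrib]
  refine Finset.sum_le_sum fun i _ => ?_
  simp only [Pi.add_apply]
  push_cast
  nlinarith [sq_nonneg ((x i : ℝ) - y i)]

lemma NN_single_zero {d : ℕ} (i : Fin d) (k : ℤ) : NN (Pi.single i k : Pt d) = (k : ℝ) ^ 2 := by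
  have := NN_single (0 : Pt d) i k
  rw [zero_add] at this
  rw [this]
  simp [NN]

lemma al_ge {d : ℕ} (hd : 5 ≤ d) : 1 ≤ al d := by
  have : (5 : ℝ) ≤ d := by exact_mod_cast hd
  unfold al; linarith

lemma ratio_le {α M N : ℝ} (hα : 1 ≤ α) (hM : 0 < M) (hN : 31 * M ≤ N) :
    M ^ α * (N + M) ^ (-α) ≤ 1 / 32 := by
  have h1 : 0 < N + M := by linarith
  rw [Real.rpow_neg h1.le, ← div_eq_mul_inv, ← Real.div_rpow hM.le h1.le]
  have h2 : M / (N + M) ≤ 1 / 32 := by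
    rw [div_le_iff₀ h1]; linarith
  calc (M / (N + M)) ^ α ≤ (M / (N + M)) ^ (1 : ℝ) :=
        Real.rpow_le_rpow_of_exponent_ge (by positivity) (by linarith) hα
    _ ≤ 1 / 32 := by rw [Real.rpow_one]; exact h2

/-- Uniform lower bound on escape probabilities of sets with at most three elements. -/
lemma esc_lower (d : ℕ) (hd : 5 ≤ d) : ∃ c0 : ℝ, 0 < c0 ∧ ∀ (A : Finset (Pt d)) (x : Pt d),
    A.card ≤ 3 → x ∈ A → c0 ≤ 1 - RL d (↑A) x := by
  have hd0 : 0 < d := by omega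
  obtain ⟨M, hM, hsup, -⟩ := exists_M d (by omega)
  obtain ⟨R, hR⟩ := exists_nat_ge (32 * M)
  have hR1 : (1 : ℝ) ≤ R := by linarith
  have hR0 : 0 < R := by exact_mod_cast (by linarith : (0 : ℝ) < R)
  refine ⟨(1 / (2 * d : ℝ)) ^ (2 * R) * (1 / 2), by positivity, ?_⟩
  intro A x hA hx
  obtain ⟨i, hi1, hi2⟩ := exists_direction hd (A.erase x)
    (by rw [Finset.card_erase_of_mem hx]; omega) x (by simp) R hR0
  have h1 := segment_prop (fun z => 1 - RL d (↑A) z) (↑A) (1 / (2 * d : ℝ)) (by positivity)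
    (fun z q h => RL_step hd0 _ z q h) x i (by
      intro k hk hk'
      apply hi1 k
      rw [Finset.mem_erase]
      refine ⟨fun h => ?_, hk'⟩
      have := congrFun h i
      simp at this
      omega) (2 * R)
  refine le_trans ?_ h1
  apply mul_le_mul_of_nonneg_left _ (by positivity)
  have h2 := RL_upper hd0 M hM hsup A (x + Pi.single i ((2 * R : ℕ) : ℤ))
  have hfar : ∀ a ∈ A, (R : ℝ) ^ 2 ≤ NN (x + Pi.single i ((2 * R : ℕ) : ℤ) - a) := by
    intro a ha
    by_cases hax : a = x
    · subst hax
      rw [add_sub_cancel_left, NN_single_zero]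
      push_cast
      nlinarith
    · exact hi2 a (Finset.mem_erase.2 ⟨hax, ha⟩)
  have h3 : ∑ w ∈ A, M ^ (al d) * (NN (x + Pi.single i ((2 * R : ℕ) : ℤ) - w) + M) ^ (-al d) ≤
      ∑ w ∈ A, (1 / 32 : ℝ) := by
    refine Finset.sum_le_sum fun w hw => ratio_le (al_ge hd) (by linarith) ?_
    have := hfar w hw
    nlinarith
  rw [Finset.sum_const, nsmul_eq_mul] at h3
  have h4 : (A.card : ℝ) ≤ 3 := by exact_mod_cast hA
  linarith

open Classical in
lemma core_lower {d : ℕ} (hd : 5 ≤ d) (M : ℝ) (hM : 100 ≤ M)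
    (hsup : ∀ z : Pt d, Av d (fun z => (NN z + M) ^ (-al d)) z ≤ (NN z + M) ^ (-al d))
    (hlow : ∀ z : Pt d, 2 * M ≤ NN z →
      (NN z - M) ^ (-al d) ≤ Av d (fun z => (NN z - M) ^ (-al d)) z)
    (W : Finset (Pt d)) (hW : W.card ≤ 2) (g : Pt d → ℝ) (hg0 : ∀ z, 0 ≤ g z)
    (hg : ∀ z, Av d (fun w => if w ∈ W then 0 else g w) z ≤ g z) (x y : Pt d) (hxW : x ∉ W)
    (Q : ℝ) (hQ : 32 * M ≤ Q)
    (hx : ∀ w ∈ W, Q ≤ NN (x - w)) (hy : ∀ w ∈ W, Q ≤ NN (y - w))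
    (c1 : ℝ) (hc1 : 0 < c1) (hball : ∀ z, NN (z - y) ≤ 4 * M → c1 ≤ g z) :
    c1 * M ^ (al d) / 2 * (NN (x - y) + M) ^ (-al d) ≤ g x := by
  have hd0 : 0 < d := by omega
  have hα := al_ge hd
  have hM0 : 0 < M := by linarith
  set α := al d with hαd
  set s : Pt d → ℝ := fun z => (max (NN z - M) M) ^ (-α) with hs
  set F : Pt d → ℝ := fun z => (NN z + M) ^ (-α) with hF
  have hs0 : ∀ z, 0 ≤ s z := fun z => Real.rpow_nonneg (hM0.le.trans (le_max_right _ _)) _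
  have hF0 : ∀ z, 0 ≤ F z := fun z => Real.rpow_nonneg (by have := NN_nonneg z; linarith) _
  have hsM : ∀ z, s z ≤ M ^ (-α) := fun z =>
    Real.rpow_le_rpow_of_nonpos hM0 (le_max_right _ _) (by linarith)
  have hMα : 0 < M ^ α := Real.rpow_pos_of_pos hM0 _
  have hMM : M ^ α * M ^ (-α) = 1 := by rw [← Real.rpow_add hM0]; simp
  have hF00 : M ^ α * F 0 = 1 := by
    simp only [hF]; rw [show NN (0 : Pt d) = 0 by simp [NN], zero_add]; exact hMM
  have hssub : ∀ p, 4 * M ≤ NN p → s p ≤ Av d s p := by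
    intro p hp
    have e1 : s p = (NN p - M) ^ (-α) := by
      simp only [hs]; rw [max_eq_left]; linarith
    rw [e1]
    refine (hlow p (by linarith)).trans (le_of_eq ?_)
    apply Av_congr
    intro q
    have : 2 * M ≤ NN (p + dv q) := by
      rw [dv, NN_single]
      have h1 := sq_le_NN p q.1
      split_ifs <;> push_cast <;>
        nlinarith [sq_nonneg ((p q.1 : ℝ) - 4), sq_nonneg ((p q.1 : ℝ) + 4)]
    simp only [hs]
    rw [max_eq_left]; linarith
  set h : Pt d → ℝ := fun z => s (z - y) - ∑ w ∈ W, (s (w - y) * M ^ α) * F (z - w) with hh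
  have hterm : ∀ w z, 0 ≤ (s (w - y) * M ^ α) * F (z - w) := fun w z =>
    mul_nonneg (mul_nonneg (hs0 _) hMα.le) (hF0 _)
  have hhs : ∀ z, h z ≤ s (z - y) := fun z => by
    have : 0 ≤ ∑ w ∈ W, (s (w - y) * M ^ α) * F (z - w) :=
      Finset.sum_nonneg fun w _ => hterm w z
    simp only [hh]; linarith
  have hhW : ∀ w ∈ W, h w ≤ 0 := by
    intro w hw
    have h1 := Finset.single_le_sum (f := fun v => (s (v - y) * M ^ α) * F (w - v))
      (fun v _ => hterm v w) hw
    simp only [sub_self] at h1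
    rw [mul_assoc, hF00, mul_one] at h1
    simp only [hh]; linarith
  have hhsub : ∀ z, 4 * M ≤ NN (z - y) → h z ≤ Av d h z := by
    intro z hz
    have e : Av d h z = Av d s (z - y) - ∑ w ∈ W, (s (w - y) * M ^ α) * Av d F (z - w) := by
      simp only [hh]
      rw [Av_sub, Av_shift s, Av_sum]
      congr 1
      apply Finset.sum_congr rfl
      intro w _
      rw [Av_mul, Av_shift F]
    rw [e]
    have h2 : ∑ w ∈ W, (s (w - y) * M ^ α) * Av d F (z - w) ≤
        ∑ w ∈ W, (s (w - y) * M ^ α) * F (z - w) :=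
      Finset.sum_le_sum fun w _ =>
        mul_le_mul_of_nonneg_left (hsup _) (mul_nonneg (hs0 _) hMα.le)
    have h3 := hssub _ hz
    simp only [hh]; linarith
  obtain ⟨l, hl⟩ : ∃ l : ℝ, l = 1 / (c1 * M ^ α) := ⟨_, rfl⟩
  have hl0 : 0 < l := by rw [hl]; positivity
  have hlc : l * (c1 * M ^ α) = 1 := by rw [hl]; field_simp
  have hlc' : M ^ (-α) = l * c1 := by
    have : M ^ α * M ^ (-α) = M ^ α * (l * c1) := by rw [hMM]; linarith
    exact mul_left_cancel₀ hMα.ne' this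
  set φ : Pt d → ℝ := fun z => if z ∈ W then 0 else h z - l * g z with hφ
  have hmain : ∀ z, φ z ≤ 0 := by
    apply max_principle hd0
    · intro ε hε
      apply (NN_finite' d (1 / ε + M) y).subset
      intro z hz
      have hz' : ε ≤ φ z := hz
      have h1 : ε ≤ s (z - y) := by
        simp only [hφ] at hz'
        split_ifs at hz' with hzW
        · linarith
        · have := hhs z
          have := mul_nonneg hl0.le (hg0 z)
          linarith
      have hu : 1 ≤ max (NN (z - y) - M) M := le_trans (by linarith) (le_max_right _ _)
      have h2 : s (z - y) ≤ (max (NN (z - y) - M) M) ^ (-1 : ℝ) :=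
        Real.rpow_le_rpow_of_exponent_le hu (by linarith)
      rw [Real.rpow_neg_one] at h2
      have h3 : ε ≤ (max (NN (z - y) - M) M)⁻¹ := h1.trans h2
      have h4 : max (NN (z - y) - M) M ≤ ε⁻¹ := by
        rw [le_inv_comm₀ (by linarith) hε]; exact h3
      have h5 := le_max_left (NN (z - y) - M) M
      change NN (z - y) ≤ 1 / ε + M
      rw [one_div]; linarith
    · intro z hz
      have hzW : z ∉ W := by
        intro hzW
        simp [hφ, hzW] at hz
      have e : φ z = h z - l * g z := by simp only [hφ, hzW, if_false]
      rw [e] at hz ⊢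
      have hnb : 4 * M ≤ NN (z - y) := by
        by_contra hlt
        push Not at hlt
        have h1 := hball z hlt.le
        have h2 := (hhs z).trans (hsM _)
        have h3 := mul_le_mul_of_nonneg_left h1 hl0.le
        linarith
      have h1 := hhsub z hnb
      have h2 := mul_le_mul_of_nonneg_left (hg z) hl0.le
      rw [← Av_mul] at h2
      have h3 : Av d h z - Av d (fun w => l * if w ∈ W then 0 else g w) z ≤ Av d φ z := by
        rw [← Av_sub]
        apply Av_mono
        intro q
        simp only [hφ]
        split_ifs with hq
        · have := hhW _ hq; linarith
        · exact le_rfl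
      linarith
  have hfin := hmain x
  simp only [hφ, hxW, if_false] at hfin
  -- evaluation of `h x`
  have hxs : F (x - y) ≤ s (x - y) := by
    simp only [hF, hs]
    apply Real.rpow_le_rpow_of_nonpos (lt_of_lt_of_le hM0 (le_max_right _ _)) _ (by linarith)
    have := NN_nonneg (x - y)
    apply max_le <;> linarith
  have hw : ∀ w ∈ W, (s (w - y) * M ^ α) * F (x - w) ≤ 1 / 4 * F (x - y) := by
    intro w hw
    have a1 := hx w hw
    have a2 := hy w hw
    rw [NN_sub_comm] at a2
    have tri : NN (x - y) ≤ 2 * NN (x - w) + 2 * NN (w - y) := by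
      have := NN_add_le (x - w) (w - y)
      rwa [sub_add_sub_cancel] at this
    have pxy := NN_nonneg (x - y)
    have e1 : s (w - y) * M ^ α * F (x - w) =
        (M ^ α * (max (NN (w - y) - M) M * (NN (x - w) + M)) ^ (-α)) := by
      rw [Real.mul_rpow (hM0.le.trans (le_max_right _ _)) (by linarith)]
      simp only [hs, hF]; ring
    have hmax : max (NN (w - y) - M) M = NN (w - y) - M := max_eq_left (by linarith)
    have key : 4 * M * (NN (x - y) + M) ≤ (NN (w - y) - M) * (NN (x - w) + M) := by
      have gen : ∀ p r t : ℝ, 32 * M ≤ p → 32 * M ≤ r → t ≤ 2 * r + 2 * p →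
          4 * M * (t + M) ≤ (p - M) * (r + M) := by
        intro p r t h1 h2 h3
        have g1 : 0 ≤ (p - 32 * M) * r := mul_nonneg (by linarith) (by linarith)
        have g2 : 0 ≤ (r - 32 * M) * p := mul_nonneg (by linarith) (by linarith)
        have g3 : M * t ≤ M * (2 * r + 2 * p) := mul_le_mul_of_nonneg_left h3 hM0.le
        have g4 : M * (32 * M) ≤ M * p := mul_le_mul_of_nonneg_left h1 hM0.le
        have g5 : M * (32 * M) ≤ M * r := mul_le_mul_of_nonneg_left h2 hM0.le
        nlinarith [mul_pos hM0 hM0]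
      exact gen _ _ _ (by linarith) (by linarith) tri
    rw [e1, hmax]
    calc M ^ α * ((NN (w - y) - M) * (NN (x - w) + M)) ^ (-α)
        ≤ M ^ α * (4 * M * (NN (x - y) + M)) ^ (-α) := by
          apply mul_le_mul_of_nonneg_left _ hMα.le
          exact Real.rpow_le_rpow_of_nonpos (by positivity) key (by linarith)
      _ = (M ^ α * M ^ (-α)) * (4 : ℝ) ^ (-α) * F (x - y) := by
          rw [Real.mul_rpow (by positivity) (by linarith),
            Real.mul_rpow (by norm_num) (by positivity)]
          simp only [hF]; ring
      _ ≤ 1 / 4 * F (x - y) := by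
          rw [hMM, one_mul]
          apply mul_le_mul_of_nonneg_right _ (hF0 _)
          calc (4 : ℝ) ^ (-α) ≤ (4 : ℝ) ^ (-1 : ℝ) :=
                Real.rpow_le_rpow_of_exponent_le (by norm_num) (by linarith)
            _ = 1 / 4 := by rw [Real.rpow_neg_one]; norm_num
  have hsum : ∑ w ∈ W, (s (w - y) * M ^ α) * F (x - w) ≤ 1 / 2 * F (x - y) := by
    refine (Finset.sum_le_sum hw).trans ?_
    rw [Finset.sum_const, nsmul_eq_mul]
    have : (W.card : ℝ) ≤ 2 := by exact_mod_cast hW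
    nlinarith [hF0 (x - y)]
  have hhx : 1 / 2 * F (x - y) ≤ h x := by simp only [hh]; linarith
  have h9 : 1 / 2 * F (x - y) ≤ l * g x := by linarith
  have h10 := mul_le_mul_of_nonneg_left h9 (by positivity : 0 ≤ c1 * M ^ α)
  calc c1 * M ^ α / 2 * F (x - y) = c1 * M ^ α * (1 / 2 * F (x - y)) := by ring
    _ ≤ c1 * M ^ α * (l * g x) := h10
    _ = (l * (c1 * M ^ α)) * g x := by ring
    _ = g x := by rw [hlc, one_mul]

/-- Lower bound on the probability of hitting `W` through `y`. -/
lemma hit_lower (d : ℕ) (hd : 5 ≤ d) : ∃ c : ℝ, 0 < c ∧ ∀ (W : Finset (Pt d)) (x y : Pt d),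
    W.card ≤ 2 → x ∉ W → y ∉ W → (∃ q, y + dv q ∈ W) →
      c * (1 + NN (x - y)) ^ (-al d) ≤ HL d (↑W) (fun z => z = y) x := by
  classical
  have hd0 : 0 < d := by omega
  have hα := al_ge hd
  obtain ⟨M, hM, hsup, hlow⟩ := exists_M d (by omega)
  have hM0 : 0 < M := by linarith
  obtain ⟨R, hR⟩ := exists_nat_ge (32 * M)
  have hR1 : (1 : ℝ) ≤ R := by linarith
  have hR0 : 0 < R := by exact_mod_cast (by linarith : (0 : ℝ) < R)
  have hR2 : (32 * M) * R ≤ (R : ℝ) ^ 2 := by nlinarith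
  obtain ⟨e, he⟩ : ∃ e : ℝ, e = 1 / (2 * d : ℝ) := ⟨_, rfl⟩
  have he0 : 0 < e := by rw [he]; positivity
  have he1 : e ≤ 1 := by
    rw [he, div_le_one (by positivity)]
    have : (5 : ℝ) ≤ d := by exact_mod_cast hd
    linarith
  obtain ⟨c1, hc1⟩ : ∃ c1 : ℝ, c1 = e ^ R * (e ^ (2 * R) * e) := ⟨_, rfl⟩
  have hc10 : 0 < c1 := by rw [hc1]; positivity
  set L : ℝ := 32 * (R : ℝ) ^ 2 + M + 4 with hL
  have hL0 : 0 < L := by positivity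
  refine ⟨e ^ (2 * R) * (c1 * M ^ (al d) / 2 * L ^ (-al d)), by positivity, ?_⟩
  intro W x y hW hx hy hyW
  set g : Pt d → ℝ := HL d (↑W) (fun z => z = y) with hg
  have hg0 : ∀ z, 0 ≤ g z := fun z => HL_nonneg _ _ _
  have hstep : ∀ z q, z + dv q ∉ (↑W : Set (Pt d)) → e * g (z + dv q) ≤ g z := by
    intro z q h; rw [he]; exact HL_step hd0 _ _ z q h
  have hgy : e ≤ g y := by
    obtain ⟨q, hq⟩ := hyW
    simp only [hg]
    rw [HL_eq hd0]
    refine le_trans ?_ (Av_ge_one ?_ q)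
    · have hq' : y + dv q ∈ (↑W : Set (Pt d)) := hq
      simp only [hq', if_true, he]
      exact le_rfl
    · intro q
      have := HL_nonneg (↑W : Set (Pt d)) (fun z => z = y) (y + dv q)
      beta_reduce
      split_ifs <;> first | assumption | norm_num
  obtain ⟨i, hi1, hi2⟩ := exists_direction hd W hW x hx R hR0
  obtain ⟨j, hj1, hj2⟩ := exists_direction hd W hW y hy R hR0
  set x' := x + Pi.single i ((2 * R : ℕ) : ℤ) with hx'
  set y' := y + Pi.single j ((2 * R : ℕ) : ℤ) with hy'
  have s1 : e ^ (2 * R) * g x' ≤ g x :=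
    segment_prop g (↑W) e he0.le hstep x i (fun k _ => hi1 k) (2 * R)
  have s2 : e ^ (2 * R) * g y ≤ g y' :=
    segment_prop_rev g (↑W) e he0.le hstep y j (fun k => hj1 k) (2 * R)
  have s3 : ∀ z, NN (z - y') ≤ 4 * M → c1 ≤ g z := by
    intro z hz
    have b := ball_prop g (↑W) e he0.le he1 hstep hg0 y' R (by
      intro w hw hwW
      have h1 := hj2 w hwW
      rw [NN_sub_comm] at h1
      nlinarith) z (by linarith)
    refine le_trans ?_ b
    rw [hc1]
    apply mul_le_mul_of_nonneg_left _ (by positivity)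
    refine le_trans ?_ s2
    exact mul_le_mul_of_nonneg_left hgy (by positivity)
  have core := core_lower hd M hM hsup hlow W hW g hg0 (by
    intro z
    simp only [hg]
    rw [HL_eq hd0 (↑W) (fun z => z = y) z]
    apply Av_mono
    intro q
    by_cases hq : z + dv q ∈ W
    · simp only [hq, Finset.mem_coe, if_true]
      split_ifs <;> norm_num
    · simp only [hq, Finset.mem_coe, if_false]
      exact le_rfl) x' y' (hi1 (2 * R)) ((R : ℝ) ^ 2) (by nlinarith) hi2 hj2 c1 hc10 s3
  refine le_trans ?_ s1
  rw [mul_assoc]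
  apply mul_le_mul_of_nonneg_left _ (by positivity)
  refine le_trans ?_ core
  rw [mul_assoc]
  apply mul_le_mul_of_nonneg_left _ (by positivity)
  have hn := NN_nonneg (x - y)
  have hn' := NN_nonneg (x' - y')
  rw [← Real.mul_rpow hL0.le (by linarith)]
  apply Real.rpow_le_rpow_of_nonpos (by linarith) _ (by linarith)
  have t1 : x' - y' = (x - y) + (Pi.single i ((2 * R : ℕ) : ℤ) - Pi.single j ((2 * R : ℕ) : ℤ)) := by
    rw [hx', hy']; abel
  have t2 := NN_add_le (x - y) (Pi.single i ((2 * R : ℕ) : ℤ) - Pi.single j ((2 * R : ℕ) : ℤ))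
  have t3 := NN_add_le (Pi.single i ((2 * R : ℕ) : ℤ) : Pt d) (-Pi.single j ((2 * R : ℕ) : ℤ))
  rw [NN_neg, NN_single_zero, NN_single_zero, ← sub_eq_add_neg] at t3
  rw [← t1] at t2
  have t5 : (((2 * R : ℕ) : ℤ) : ℝ) ^ 2 = 4 * (R : ℝ) ^ 2 := by push_cast; ring
  rw [t5] at t3
  have t4 : NN (x' - y') + M ≤ 2 * NN (x - y) + 32 * (R : ℝ) ^ 2 + M := by linarith
  nlinarith [mul_nonneg (by positivity : (0:ℝ) ≤ 32 * (R : ℝ) ^ 2 + M) hn]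

end HATFormal

namespace HATFormal

lemma RL_far {d : ℕ} (hd : 5 ≤ d) (M : ℝ) (hM : 100 ≤ M)
    (hsup : ∀ z : Pt d, Av d (fun z => (NN z + M) ^ (-al d)) z ≤ (NN z + M) ^ (-al d))
    (W : Finset (Pt d)) (x : Pt d) (n : ℕ) (hW : W.card ≤ n) (r : ℝ) (hr : 0 < r)
    (h : ∀ w ∈ W, r ^ 2 ≤ NN (x - w)) :
    RL d (↑W) x ≤ n * M ^ (al d) * r ^ ((2 : ℝ) - d) := by
  have hα := al_ge hd
  have hM0 : 0 < M := by linarith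
  have hMα : 0 < M ^ (al d) := Real.rpow_pos_of_pos hM0 _
  refine (RL_upper (by omega) M hM hsup W x).trans ?_
  have e : r ^ ((2 : ℝ) - d) = (r ^ 2) ^ (-al d) := by
    rw [← Real.rpow_natCast r 2, ← Real.rpow_mul hr.le]
    congr 1
    unfold al; push_cast; ring
  have h1 : ∑ w ∈ W, M ^ (al d) * (NN (x - w) + M) ^ (-al d) ≤
      ∑ _w ∈ W, M ^ (al d) * r ^ ((2 : ℝ) - d) := by
    refine Finset.sum_le_sum fun w hw => mul_le_mul_of_nonneg_left ?_ hMα.le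
    rw [e]
    apply Real.rpow_le_rpow_of_nonpos (by positivity) _ (by linarith)
    have := h w hw
    linarith
  refine h1.trans ?_
  rw [Finset.sum_const, nsmul_eq_mul, mul_assoc]
  apply mul_le_mul_of_nonneg_right _ (by positivity)
  exact_mod_cast hW

lemma pq_real (e eU K KU h hU R RU η κ c0 : ℝ) (hc0 : 0 < c0) (he : c0 ≤ e) (heU : e - η ≤ eU)
    (heU0 : 0 ≤ eU) (hKU : eU ≤ KU) (hK : KU ≤ K) (hκ : 0 < κ) (hh : κ ≤ h) (hR : h ≤ R)
    (hhU : h - η * η ≤ hU) (hhU0 : 0 ≤ hU) (hRU : hU ≤ RU) (hRU' : RU ≤ R + η) (hη : 0 ≤ η) :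
    (1 - (η / c0 + η * η / κ + η / κ)) * (e / K * (h / R)) ≤ eU / KU * (hU / RU) := by
  have hrhs : 0 ≤ eU / KU * (hU / RU) :=
    mul_nonneg (div_nonneg heU0 (heU0.trans hKU)) (div_nonneg hhU0 (hhU0.trans hRU))
  have hh0 : 0 < h := by linarith
  have hR0 : 0 < R := by linarith
  have he0 : 0 < e := by linarith
  have hK0 : 0 ≤ K := by linarith
  have hqn : 0 ≤ e / K * (h / R) := by positivity
  obtain ⟨u, hu⟩ : ∃ u, u = η / c0 := ⟨_, rfl⟩
  obtain ⟨v, hv⟩ : ∃ v, v = η * η / κ := ⟨_, rfl⟩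
  obtain ⟨w, hw⟩ : ∃ w, w = η / κ := ⟨_, rfl⟩
  rw [← hu, ← hv, ← hw]
  have hu0 : 0 ≤ u := by rw [hu]; positivity
  have hv0 : 0 ≤ v := by rw [hv]; positivity
  have hw0 : 0 ≤ w := by rw [hw]; positivity
  by_cases hδ : 1 - (u + v + w) ≤ 0
  · exact le_trans (mul_nonpos_of_nonpos_of_nonneg hδ hqn) hrhs
  push Not at hδ
  have eu : η = u * c0 := by rw [hu]; field_simp
  have ev : η * η = v * κ := by rw [hv]; field_simp
  have ew : η = w * κ := by rw [hw]; field_simp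
  have k1 : e * (1 - u) ≤ eU := by nlinarith
  have k2 : h * (1 - v) ≤ hU := by nlinarith
  have k3 : RU ≤ R * (1 + w) := by nlinarith
  have eUp : 0 < eU := lt_of_lt_of_le (mul_pos he0 (by linarith)) k1
  have hUp : 0 < hU := lt_of_lt_of_le (mul_pos hh0 (by linarith)) k2
  have KUp : 0 < KU := by linarith
  have Kp : 0 < K := by linarith
  have RUp : 0 < RU := by linarith
  have f1 : e / K * (1 - u) ≤ eU / KU := by
    rw [div_mul_eq_mul_div]
    exact div_le_div₀ heU0 k1 KUp hK
  have f2 : h / R * ((1 - v) * (1 - w)) ≤ hU / RU := by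
    have g1 : h * (1 - v) / (R * (1 + w)) ≤ hU / RU := div_le_div₀ hhU0 k2 RUp k3
    refine le_trans ?_ g1
    rw [le_div_iff₀ (by positivity)]
    have : h / R * ((1 - v) * (1 - w)) * (R * (1 + w)) = h * (1 - v) * (1 - w ^ 2) := by
      field_simp; ring
    rw [this]
    have : 0 ≤ h * (1 - v) := mul_nonneg hh0.le (by linarith)
    nlinarith [sq_nonneg w]
  calc (1 - (u + v + w)) * (e / K * (h / R))
      ≤ ((1 - u) * ((1 - v) * (1 - w))) * (e / K * (h / R)) := by
        apply mul_le_mul_of_nonneg_right _ hqn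
        nlinarith [mul_nonneg hu0 hv0, mul_nonneg hu0 hw0, mul_nonneg hv0 hw0,
          mul_nonneg (mul_nonneg hu0 hv0) (by linarith : (0:ℝ) ≤ 1 - w)]
    _ = (e / K * (1 - u)) * (h / R * ((1 - v) * (1 - w))) := by ring
    _ ≤ eU / KU * (hU / RU) := by
        apply mul_le_mul f1 f2 _ (by positivity)
        apply mul_nonneg (by positivity)
        apply mul_nonneg <;> linarith

lemma log_bound (α b : ℝ) (hα : 1 ≤ α) : ∃ C : ℝ, 0 < C ∧ ∀ r N : ℝ, 1 < r → 0 ≤ N →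
    N ≤ 2 * (b * Real.log r) ^ 2 + 2 → (1 + N) ^ α ≤ C * r ^ (0.1 : ℝ) := by
  obtain ⟨ε, hε⟩ : ∃ ε : ℝ, ε = 0.05 / α := ⟨_, rfl⟩
  have hα0 : 0 < α := by linarith
  have hε0 : 0 < ε := by rw [hε]; positivity
  refine ⟨(3 + 2 * b ^ 2 / ε ^ 2) ^ α, by positivity, ?_⟩
  intro r N hr hN0 hN
  have hr0 : 0 < r := by linarith
  have h1 := Real.log_le_rpow_div hr0.le hε0
  have hl : 0 < Real.log r := Real.log_pos hr
  have h2 : Real.log r ^ 2 ≤ (r ^ ε / ε) ^ 2 := pow_le_pow_left₀ hl.le h1 2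
  have h3 : (r ^ ε) ^ 2 = r ^ (2 * ε) := by
    rw [← Real.rpow_natCast (r ^ ε) 2, ← Real.rpow_mul hr0.le]; congr 1; push_cast; ring
  have h4 : 1 ≤ r ^ (2 * ε) := Real.one_le_rpow hr.le (by positivity)
  have h5 : 1 + N ≤ (3 + 2 * b ^ 2 / ε ^ 2) * r ^ (2 * ε) := by
    have : 2 * (b * Real.log r) ^ 2 ≤ 2 * b ^ 2 / ε ^ 2 * r ^ (2 * ε) := by
      rw [div_pow, h3] at h2
      calc 2 * (b * Real.log r) ^ 2 = 2 * b ^ 2 * Real.log r ^ 2 := by ring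
        _ ≤ 2 * b ^ 2 * (r ^ (2 * ε) / ε ^ 2) := mul_le_mul_of_nonneg_left h2 (by positivity)
        _ = _ := by ring
    linarith
  calc (1 + N) ^ α ≤ ((3 + 2 * b ^ 2 / ε ^ 2) * r ^ (2 * ε)) ^ α :=
        Real.rpow_le_rpow (by linarith) h5 hα0.le
    _ = (3 + 2 * b ^ 2 / ε ^ 2) ^ α * r ^ (0.1 : ℝ) := by
        rw [Real.mul_rpow (by positivity) (by positivity), ← Real.rpow_mul hr0.le]
        congr 2
        rw [hε]; field_simp; norm_num

lemma dist0_sq {d : ℕ} (x y : Pt d) : dist0 d x y ^ 2 = NN (x - y) := by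
  unfold dist0
  rw [Real.sq_sqrt (Finset.sum_nonneg fun i _ => sq_nonneg _)]
  simp [NN]

lemma dist0_nonneg {d : ℕ} (x y : Pt d) : 0 ≤ dist0 d x y := Real.sqrt_nonneg _

lemma setDist_le {d : ℕ} (A B : Finset (Pt d)) (x y : Pt d) (hx : x ∈ A) (hy : y ∈ B) :
    setDist d A B ≤ dist0 d x y := by
  apply csInf_le
  · refine ⟨0, ?_⟩
    rintro r ⟨u, -, v, -, rfl⟩
    exact dist0_nonneg _ _
  · exact ⟨x, hx, y, hy, rfl⟩

lemma le_diam0 {d : ℕ} (A : Finset (Pt d)) (x y : Pt d) (hx : x ∈ A) (hy : y ∈ A) :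
    dist0 d x y ≤ diam0 d A := by
  apply le_csSup
  · apply Set.Finite.bddAbove
    apply Set.Finite.subset ((A ×ˢ A).finite_toSet.image fun p => dist0 d p.1 p.2)
    rintro r ⟨u, hu, v, hv, rfl⟩
    exact ⟨(u, v), by simp [hu, hv], rfl⟩
  · exact ⟨x, hx, y, hy, rfl⟩

lemma esc_nonneg {d : ℕ} (hd : 0 < d) (A : Set (Pt d)) (x : Pt d) : 0 ≤ esc d A x := by
  by_cases hx : x ∈ A
  · rw [esc_eq hd A x hx]
    have := HL_le_one hd A (fun _ => True) x
    linarith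
  · simp [esc, hx]

lemma capa_eq {d : ℕ} (A : Finset (Pt d)) : capa d (↑A) = ∑ x ∈ A, esc d (↑A) x := by
  unfold capa
  exact Finset.tsum_subtype' A (fun x => esc d (↑A) x)

lemma capa_le {d : ℕ} (hd : 0 < d) (E : ClusteringS d)
    (hdis : ∀ i j, i ≠ j → Disjoint (E.2 i) (E.2 j)) :
    capa d (↑(confOf d E)) ≤ capS d E := by
  rw [capa_eq, capS]
  have : ∑ x ∈ confOf d E, esc d (↑(confOf d E)) x =
      ∑ i, ∑ x ∈ E.2 i, esc d (↑(confOf d E)) x := by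
    conv_lhs => rw [confOf]
    rw [Finset.sum_biUnion]
    · rfl
    · intro i _ j _ hij
      exact hdis i j hij
  rw [this]
  refine Finset.sum_le_sum fun i _ => ?_
  rw [capa_eq]
  refine Finset.sum_le_sum fun x hx => ?_
  have hsub : (↑(E.2 i) : Set (Pt d)) ⊆ ↑(confOf d E) := by
    intro z hz
    exact Finset.mem_biUnion.2 ⟨i, Finset.mem_univ _, hz⟩
  rw [esc_eq hd _ x hx, esc_eq hd _ x (hsub hx)]
  have := RL_mono hd hsub x
  simp only [RL] at this
  linarith

lemma mem_others {d k : ℕ} (C : Fin k → Finset (Pt d)) (i : Fin k) (v : Pt d) :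
    v ∈ others d C i ↔ ∃ j, j ≠ i ∧ v ∈ C j := by
  unfold others
  rw [Finset.mem_biUnion]
  constructor
  · rintro ⟨j, -, hj⟩
    split_ifs at hj with h
    · simp at hj
    · exact ⟨j, h, hj⟩
  · rintro ⟨j, h, hj⟩
    exact ⟨j, Finset.mem_univ _, by simp [h, hj]⟩

/-- Termwise comparison. -/
lemma pq_term (d n : ℕ) (hd : 5 ≤ d) (b : ℝ) :
    ∃ c : ℝ, 0 < c ∧ ∀ a : ℝ, 1 < a → ∀ E0 : ClusteringS d,
      IsClusteringConf d n E0 → IsDOT d E0.2 a b → ∀ (i : Fin E0.1) (x y : Pt d), x ∈ E0.2 i →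
        (1 - c * a ^ ((2.1 : ℝ) - (d : ℝ))) * qIHAT d E0 i x y ≤ pHAT d (confOf d E0) x y := by
  classical
  have hd0 : 0 < d := by omega
  have hα := al_ge hd
  obtain ⟨M, hM, hsup, -⟩ := exists_M d (by omega)
  obtain ⟨c0, hc0, hesc⟩ := esc_lower d hd
  obtain ⟨c1, hc1, hhit⟩ := hit_lower d hd
  obtain ⟨C, hC, hlog⟩ := log_bound (al d) b hα
  have hM0 : 0 < M := by linarith
  obtain ⟨D, hD⟩ : ∃ D : ℝ, D = n * M ^ (al d) := ⟨_, rfl⟩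
  have hD0 : 0 ≤ D := by rw [hD]; positivity
  refine ⟨D / c0 + D * (D * C / c1) + D * C / c1 + 1, by positivity, ?_⟩
  intro a ha E0 hcl hdot i x y hx
  obtain ⟨hne, hdis, hcard⟩ := hcl
  obtain ⟨hsz, hsep, hdiam⟩ := hdot
  obtain ⟨r, hr⟩ : ∃ r, r = setDist d (E0.2 i) (others d E0.2 i) := ⟨_, rfl⟩
  have har : a ≤ r := by
    rw [hr]
    refine hsep.trans ?_
    exact ciInf_le (Set.finite_range _).bddBelow i
  have hr1 : 1 < r := by linarith
  have hr0 : 0 < r := by linarith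
  have hdm := hdiam i
  rw [← hr] at hdm
  set U := confOf d E0 with hU
  set V := others d E0.2 i with hV
  set W := (E0.2 i).erase x with hW
  have hAU : E0.2 i ⊆ U := fun z hz => Finset.mem_biUnion.2 ⟨i, Finset.mem_univ _, hz⟩
  have hVU : V ⊆ U := by
    intro z hz
    obtain ⟨j, -, hj⟩ := (mem_others _ _ _).1 hz
    exact Finset.mem_biUnion.2 ⟨j, Finset.mem_univ _, hj⟩
  have hAV : ∀ z ∈ E0.2 i, z ∉ V := by
    intro z hz hzV
    obtain ⟨j, hji, hj⟩ := (mem_others _ _ _).1 hzV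
    exact Finset.disjoint_left.1 (hdis j i hji) hj hz
  have hUAV : (↑U : Set (Pt d)) = ↑(E0.2 i) ∪ ↑V := by
    ext z
    simp only [Set.mem_union, Finset.mem_coe]
    constructor
    · intro hz
      obtain ⟨j, -, hj⟩ := Finset.mem_biUnion.1 hz
      by_cases hji : j = i
      · subst hji; exact Or.inl hj
      · exact Or.inr ((mem_others _ _ _).2 ⟨j, hji, hj⟩)
    · rintro (h | h)
      · exact hAU h
      · exact hVU h
  have hUx : (↑U : Set (Pt d)) \ {x} = ↑W ∪ ↑V := by
    ext z
    simp only [hUAV, Set.mem_diff, Set.mem_union, Finset.mem_coe, Set.mem_singleton_iff, hW,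
      Finset.mem_erase]
    constructor
    · rintro ⟨h | h, h'⟩
      · exact Or.inl ⟨h', h⟩
      · exact Or.inr h
    · rintro (h | h)
      · exact ⟨Or.inl h.2, h.1⟩
      · refine ⟨Or.inr h, ?_⟩
        rintro rfl
        exact hAV _ hx h
  have hAx : (↑(E0.2 i) : Set (Pt d)) \ {x} = ↑W := by
    rw [hW, Finset.coe_erase]
  have hVn : V.card ≤ n := by rw [← hcard]; exact Finset.card_le_card hVU
  have hAc : (E0.2 i).card ≤ 3 := by rcases hsz i with h | h <;> omega
  have hWc : W.card ≤ 2 := by rw [hW, Finset.card_erase_of_mem hx]; omega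
  have hWn : W.card ≤ n := by
    rw [← hcard]
    exact Finset.card_le_card ((Finset.erase_subset _ _).trans hAU)
  have hfar : ∀ w ∈ E0.2 i, ∀ v ∈ V, r ^ 2 ≤ NN (w - v) := by
    intro w hw v hv
    rw [← dist0_sq]
    apply pow_le_pow_left₀ hr0.le
    rw [hr]
    exact setDist_le _ _ _ _ hw hv
  obtain ⟨η, hη⟩ : ∃ η, η = D * r ^ ((2 : ℝ) - d) := ⟨_, rfl⟩
  have hη0 : 0 ≤ η := by rw [hη]; positivity
  have hRV : RL d (↑V) x ≤ η := by
    rw [hη, hD]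
    exact RL_far hd M hM hsup V x n hVn r hr0 (hfar x hx)
  have hRW : ∀ v ∈ (↑V : Set (Pt d)), RL d (↑W) v ≤ η := by
    intro v hv
    rw [hη, hD]
    refine RL_far hd M hM hsup W v n hWn r hr0 ?_
    intro w hw
    rw [NN_sub_comm]
    exact hfar w (Finset.mem_of_mem_erase hw) v hv
  have hp0 : 0 ≤ pHAT d U x y := by
    unfold pHAT harm transP
    rw [hitFrom_eq, retProb_eq, capa_eq]
    exact mul_nonneg (div_nonneg (esc_nonneg hd0 _ _)
      (Finset.sum_nonneg fun z _ => esc_nonneg hd0 _ _))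
      (div_nonneg (HL_nonneg _ _ _) (HL_nonneg _ _ _))
  have hq0 : 0 ≤ qIHAT d E0 i x y := by
    unfold qIHAT harmS transP capS
    rw [hitFrom_eq, retProb_eq]
    refine mul_nonneg (div_nonneg (esc_nonneg hd0 _ _)
      (Finset.sum_nonneg fun j _ => ?_))
      (div_nonneg (HL_nonneg _ _ _) (HL_nonneg _ _ _))
    rw [capa_eq]
    exact Finset.sum_nonneg fun z _ => esc_nonneg hd0 _ _
  by_cases hh : HL d (↑W) (fun z => z = y) x = 0
  · have : qIHAT d E0 i x y = 0 := by
      unfold qIHAT transP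
      rw [hitFrom_eq, hAx, hh, zero_div, mul_zero]
    rw [this, mul_zero]
    exact hp0
  have hxW : x ∉ W := by simp [hW]
  obtain ⟨hyW, q, hq⟩ := hit_pos hd0 (↑W) x y hxW hh
  have hlow := hhit W x y hWc hxW hyW ⟨q, hq⟩
  have hN : NN (x - y) ≤ 2 * (b * Real.log r) ^ 2 + 2 := by
    have h1 := NN_add_le (x - (y + dv q)) (dv q)
    rw [show x - (y + dv q) + dv q = x - y by abel] at h1
    have h2 : NN (dv q) = 1 := by
      unfold dv
      rw [NN_single_zero]
      split_ifs <;> norm_num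
    have h3 : NN (x - (y + dv q)) ≤ (b * Real.log r) ^ 2 := by
      rw [← dist0_sq]
      apply pow_le_pow_left₀ (dist0_nonneg _ _)
      exact (le_diam0 _ _ _ hx (Finset.mem_of_mem_erase hq)).trans hdm
    linarith
  have hNN := NN_nonneg (x - y)
  have hlb := hlog r (NN (x - y)) hr1 hNN hN
  obtain ⟨κ, hκ⟩ : ∃ κ, κ = c1 * (1 + NN (x - y)) ^ (-al d) := ⟨_, rfl⟩
  have hκ0 : 0 < κ := by rw [hκ]; positivity
  rw [← hκ] at hlow
  have hκinv : 1 / κ ≤ C / c1 * r ^ (0.1 : ℝ) := by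
    rw [hκ, Real.rpow_neg (by linarith)]
    have : 1 / (c1 * ((1 + NN (x - y)) ^ al d)⁻¹) = (1 + NN (x - y)) ^ al d / c1 := by
      have : (0 : ℝ) < (1 + NN (x - y)) ^ al d := by positivity
      field_simp
    rw [this, div_mul_eq_mul_div]
    exact div_le_div_of_nonneg_right hlb hc1.le
  have hmain := pq_real (esc d (↑(E0.2 i)) x) (esc d (↑U) x) (capS d E0) (capa d (↑U))
    (HL d (↑W) (fun z => z = y) x) (HL d (↑W ∪ ↑V) (fun z => z = y) x)
    (RL d (↑W) x) (RL d (↑W ∪ ↑V) x) η κ c0 hc0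
    (by rw [esc_eq hd0 _ x hx]; exact hesc _ _ hAc hx)
    (by
      rw [esc_eq hd0 _ x hx, esc_eq hd0 _ x (hAU hx), hUAV]
      have := RL_union hd0 (↑(E0.2 i)) (↑V) x
      simp only [RL] at this hRV
      linarith)
    (esc_nonneg hd0 _ _)
    (by
      rw [capa_eq]
      exact Finset.single_le_sum (f := fun z => esc d (↑U) z)
        (fun z _ => esc_nonneg hd0 _ _) (hAU hx))
    (capa_le hd0 E0 hdis) hκ0 hlow (HL_le_RL hd0 _ _ _)
    (by
      have h1 := hit_union hd0 (↑W) (↑V) (fun z => z = y) η hη0 hRW x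
      have h2 := mul_le_mul_of_nonneg_left hRV hη0
      linarith)
    (HL_nonneg _ _ _) (HL_le_RL hd0 _ _ _)
    (by
      have := RL_union hd0 (↑W) (↑V) x
      linarith) hη0
  have hpe : pHAT d U x y = esc d (↑U) x / capa d (↑U) *
      (HL d (↑W ∪ ↑V) (fun z => z = y) x / RL d (↑W ∪ ↑V) x) := by
    unfold pHAT harm transP
    rw [hitFrom_eq, retProb_eq, hUx]
  have hqe : qIHAT d E0 i x y = esc d (↑(E0.2 i)) x / capS d E0 *
      (HL d (↑W) (fun z => z = y) x / RL d (↑W) x) := by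
    unfold qIHAT harmS transP
    rw [hitFrom_eq, retProb_eq, hAx]
  rw [← hpe, ← hqe] at hmain
  refine le_trans (mul_le_mul_of_nonneg_right ?_ hq0) hmain
  -- numerical estimate
  have hd5 : (5 : ℝ) ≤ d := by exact_mod_cast hd
  obtain ⟨ρ, hρ⟩ : ∃ ρ, ρ = r ^ ((2.1 : ℝ) - d) := ⟨_, rfl⟩
  have hρ0 : 0 < ρ := by rw [hρ]; positivity
  have n1 : η ≤ D * ρ := by
    rw [hη, hρ]
    apply mul_le_mul_of_nonneg_left _ hD0
    apply Real.rpow_le_rpow_of_exponent_le hr1.le; norm_num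
  have n2 : η ≤ D := by
    rw [hη]
    have : r ^ ((2 : ℝ) - d) ≤ 1 := Real.rpow_le_one_of_one_le_of_nonpos hr1.le (by linarith)
    nlinarith
  have n3 : η / κ ≤ D * C / c1 * ρ := by
    have e1 : r ^ ((2 : ℝ) - d) * r ^ (0.1 : ℝ) = ρ := by
      rw [hρ, ← Real.rpow_add hr0]; congr 1; norm_num; ring
    calc η / κ = η * (1 / κ) := by ring
      _ ≤ η * (C / c1 * r ^ (0.1 : ℝ)) := mul_le_mul_of_nonneg_left hκinv hη0
      _ = D * C / c1 * (r ^ ((2 : ℝ) - d) * r ^ (0.1 : ℝ)) := by rw [hη]; ring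
      _ = _ := by rw [e1]
  have n4 : η * η / κ ≤ D * (D * C / c1) * ρ := by
    calc η * η / κ = η * (η / κ) := by ring
      _ ≤ D * (D * C / c1 * ρ) := mul_le_mul n2 n3 (by positivity) hD0
      _ = _ := by ring
  have n5 : η / c0 ≤ D / c0 * ρ := by
    rw [div_mul_eq_mul_div]
    exact div_le_div_of_nonneg_right n1 hc0.le
  have n6 : ρ ≤ a ^ ((2.1 : ℝ) - d) := by
    rw [hρ]
    exact Real.rpow_le_rpow_of_nonpos (by linarith) har (by linarith)
  have n7 := mul_le_mul_of_nonneg_left n6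
    (by positivity : 0 ≤ D / c0 + D * (D * C / c1) + D * C / c1 + 1)
  nlinarith
end HATFormal

namespace HATFormal

lemma mem_confOf_updC {d : ℕ} (E0 E1 : ClusteringS d) (i : Fin E0.1) (x y : Pt d)
    (h : E1 = updC d E0 i x y) : y ∈ confOf d E1 := by
  subst h
  refine Finset.mem_biUnion.2 ⟨i, Finset.mem_univ _, ?_⟩
  simp [updC]

/-- **Approximation of transition probabilities.** -/
theorem p_to_q (d n : ℕ) (hd : 5 ≤ d) (hn : 4 ≤ n) (b : ℝ) (hb : 1 < b) :
    ∃ c : ℝ, 0 < c ∧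
      ∀ a : ℝ, 1 < a → Real.exp (max (100 * b) (10 * (d : ℝ) ^ 2)) ≤ a →
        ∀ E0 E1 : ClusteringS d,
          IsClusteringConf d n E0 → IsDOT d E0.2 a b →
          IsClusteringConf d n E1 → IsDOT d E1.2 a b →
            (1 - c * a ^ ((2.1 : ℝ) - (d : ℝ))) * ihatProb d E0 E1 ≤ liftProb d E0 E1 := by
  classical
  obtain ⟨c, hc, h⟩ := pq_term d n hd b
  refine ⟨c, hc, ?_⟩
  intro a ha _ E0 E1 hcl hdot _ _
  have hterm := h a ha E0 hcl hdot
  obtain ⟨-, hdis, -⟩ := hcl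
  set f : Pt d → Pt d → ℝ := fun x y => ∑ i : Fin E0.1,
    if x ∈ E0.2 i ∧ E1 = updC d E0 i x y then qIHAT d E0 i x y else 0 with hf
  set g : Pt d → Pt d → ℝ := fun x y =>
    if ∃ i : Fin E0.1, x ∈ E0.2 i ∧ E1 = updC d E0 i x y
    then pHAT d (confOf d E0) x y else 0 with hg
  have hmem : ∀ (i : Fin E0.1) x, x ∈ E0.2 i → x ∈ confOf d E0 := fun i x hx =>
    Finset.mem_biUnion.2 ⟨i, Finset.mem_univ _, hx⟩
  have hf1 : ∀ x y, y ∉ confOf d E1 → f x y = 0 := by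
    intro x y hy
    refine Finset.sum_eq_zero fun i _ => if_neg ?_
    rintro ⟨-, he⟩
    exact hy (mem_confOf_updC E0 E1 i x y he)
  have hf2 : ∀ x y, x ∉ confOf d E0 → f x y = 0 := by
    intro x y hx
    refine Finset.sum_eq_zero fun i _ => if_neg ?_
    rintro ⟨h1, -⟩
    exact hx (hmem i x h1)
  have hg1 : ∀ x y, y ∉ confOf d E1 → g x y = 0 := by
    intro x y hy
    refine if_neg ?_
    rintro ⟨i, -, he⟩
    exact hy (mem_confOf_updC E0 E1 i x y he)
  have hg2 : ∀ x y, x ∉ confOf d E0 → g x y = 0 := by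
    intro x y hx
    refine if_neg ?_
    rintro ⟨i, h1, -⟩
    exact hx (hmem i x h1)
  have red : ∀ k : Pt d → Pt d → ℝ, (∀ x y, y ∉ confOf d E1 → k x y = 0) →
      (∀ x y, x ∉ confOf d E0 → k x y = 0) →
      ∑' x, ∑' y, k x y = ∑ x ∈ confOf d E0, ∑ y ∈ confOf d E1, k x y := by
    intro k k1 k2
    have : ∀ x, ∑' y, k x y = ∑ y ∈ confOf d E1, k x y := fun x =>
      tsum_eq_sum fun y hy => k1 x y hy
    simp only [this]
    exact tsum_eq_sum fun x hx => Finset.sum_eq_zero fun y _ => k2 x y hx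
  have ei : ihatProb d E0 E1 = ∑ x ∈ confOf d E0, ∑ y ∈ confOf d E1, f x y := by
    rw [← red f hf1 hf2]
    unfold ihatProb
    simp only [hf]
  have el : liftProb d E0 E1 = ∑ x ∈ confOf d E0, ∑ y ∈ confOf d E1, g x y := by
    rw [← red g hg1 hg2]
    unfold liftProb
    simp only [hg]
  rw [ei, el, Finset.mul_sum]
  refine Finset.sum_le_sum fun x _ => ?_
  rw [Finset.mul_sum]
  refine Finset.sum_le_sum fun y _ => ?_
  by_cases hex : ∃ i : Fin E0.1, x ∈ E0.2 i ∧ E1 = updC d E0 i x y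
  · obtain ⟨i, hi⟩ := id hex
    have e1 : f x y = qIHAT d E0 i x y := by
      simp only [hf]
      rw [Finset.sum_eq_single i]
      · rw [if_pos hi]
      · intro j _ hji
        refine if_neg ?_
        rintro ⟨hj, -⟩
        exact Finset.disjoint_left.1 (hdis j i hji) hj hi.1
      · intro hne; exact absurd (Finset.mem_univ i) hne
    have e2 : g x y = pHAT d (confOf d E0) x y := if_pos hex
    rw [e1, e2]
    exact hterm i x y hi.1
  · have e1 : f x y = 0 := by
      refine Finset.sum_eq_zero fun i _ => if_neg ?_
      intro hi; exact hex ⟨i, hi⟩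
    have e2 : g x y = 0 := if_neg hex
    rw [e1, e2, mul_zero]

end HATFormal
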